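/- Let H be a real-analytic hypersurface in an open set U ⊆ ℂⁿ (n ≥ 2) that is curve-supported from two sides at a point p ∈ H, and let V be a connected component of U ∖ H containing one of the support curves minus p. Then there exists an open neighborhood Ω of p in ℂⁿ such that: for every holomorphic function f : V → ℂ, if there exist δ > 0 and a holomorphic function g on B_δ(p) with g = f on B_δ(p) ∩ V, then there exists a holomorphic function F : Ω → ℂ with F = f on Ω ∩ V. -/

import Mathlib

open Metric

noncomputable section

/-- `H` is a (singular) real-analytic hypersurface in the open set `U ⊆ ℂⁿ`:
`H = {z ∈ U : ρ z = 0}` for some real-analytic `ρ : U → ℝ` (analytic over `ℝ`),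
`H` nonempty, and `ρ` does not vanish identically on any connected component of `U`. -/
def IsRealAnalyticHypersurface {n : ℕ} (U H : Set (EuclideanSpace ℂ (Fin n))) : Prop :=
  IsOpen U ∧ H.Nonempty ∧
    ∃ ρ : EuclideanSpace ℂ (Fin n) → ℝ,
      AnalyticOnNhd ℝ ρ U ∧
      H = {z | z ∈ U ∧ ρ z = 0} ∧
      ∀ z ∈ U, ∃ w ∈ connectedComponentIn U z, ρ w ≠ 0

/-- `C = φ '' 𝔻` is a support curve for `H` at `p`, parametrized by the nonconstant
holomorphic map `φ : 𝔻 → U` with `φ 0 = p` and `C ∩ H = {p}`. -/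
def IsSupportCurveVia {n : ℕ} (U H : Set (EuclideanSpace ℂ (Fin n)))
    (p : EuclideanSpace ℂ (Fin n)) (φ : ℂ → EuclideanSpace ℂ (Fin n))
    (C : Set (EuclideanSpace ℂ (Fin n))) : Prop :=
  DifferentiableOn ℂ φ (ball 0 1) ∧
  Set.MapsTo φ (ball 0 1) U ∧
  (∃ a ∈ ball (0 : ℂ) 1, ∃ b ∈ ball (0 : ℂ) 1, φ a ≠ φ b) ∧
  φ 0 = p ∧
  C = φ '' ball 0 1 ∧
  C ∩ H = {p}

/-- `C` is a support curve for `H` at `p`. -/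
def IsSupportCurve {n : ℕ} (U H : Set (EuclideanSpace ℂ (Fin n)))
    (p : EuclideanSpace ℂ (Fin n)) (C : Set (EuclideanSpace ℂ (Fin n))) : Prop :=
  ∃ φ : ℂ → EuclideanSpace ℂ (Fin n), IsSupportCurveVia U H p φ C

/-- `V` is a connected component of `U \ H`. -/
def IsComponentOfComplement {n : ℕ} (U H V : Set (EuclideanSpace ℂ (Fin n))) : Prop :=
  ∃ x ∈ U \ H, V = connectedComponentIn (U \ H) x

/-- `H` is curve-supported from two sides at `p`: there are two support curves at `p`
lying (off `p`) in two distinct connected components of `U \ H`. -/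
def CurveSupportedFromTwoSides {n : ℕ} (U H : Set (EuclideanSpace ℂ (Fin n)))
    (p : EuclideanSpace ℂ (Fin n)) : Prop :=
  ∃ C₁ C₂ V₁ V₂ : Set (EuclideanSpace ℂ (Fin n)),
    IsSupportCurve U H p C₁ ∧ IsSupportCurve U H p C₂ ∧
    IsComponentOfComplement U H V₁ ∧ IsComponentOfComplement U H V₂ ∧
    V₁ ≠ V₂ ∧ C₁ \ {p} ⊆ V₁ ∧ C₂ \ {p} ⊆ V₂

/-- `ψ` is an analytic disc attached to `S`: a nonconstant continuous map on the closed
unit disc, holomorphic on the open unit disc, with boundary values in `S`. -/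
def IsAttachedDisc {n : ℕ} (S : Set (EuclideanSpace ℂ (Fin n)))
    (ψ : ℂ → EuclideanSpace ℂ (Fin n)) : Prop :=
  ContinuousOn ψ (closedBall 0 1) ∧
  DifferentiableOn ℂ ψ (ball 0 1) ∧
  (∃ a ∈ closedBall (0 : ℂ) 1, ∃ b ∈ closedBall (0 : ℂ) 1, ψ a ≠ ψ b) ∧
  ψ '' sphere 0 1 ⊆ S

/-- The polynomial hull of `K ⊆ ℂⁿ`. -/
def polyHull {n : ℕ} (K : Set (EuclideanSpace ℂ (Fin n))) : Set (EuclideanSpace ℂ (Fin n)) :=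
  {z | ∀ P : MvPolynomial (Fin n) ℂ,
    ‖MvPolynomial.eval (fun i => z i) P‖ ≤
      ⨆ w : K, ‖MvPolynomial.eval (fun i => (w : EuclideanSpace ℂ (Fin n)) i) P‖}

/-- The rational hull of `K ⊆ ℂⁿ`. -/
def ratHull {n : ℕ} (K : Set (EuclideanSpace ℂ (Fin n))) : Set (EuclideanSpace ℂ (Fin n)) :=
  {z | ∀ P : MvPolynomial (Fin n) ℂ,
    MvPolynomial.eval (fun i => z i) P ∈
      (fun w : EuclideanSpace ℂ (Fin n) => MvPolynomial.eval (fun i => w i) P) '' K}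


open Set Filter Topology
open scoped Interval


lemma paramInt_differentiableOn {E : Type*} [NormedAddCommGroup E] [NormedSpace ℂ E]
    [FiniteDimensional ℂ E] {V : Set E} (hV : IsOpen V) {f : E → ℂ} (hf : DifferentiableOn ℂ f V)
    {γ : ℝ → E} (hγ : Continuous γ) {c : ℝ → ℂ} (hc : Continuous c) {ε : ℝ} 
    (h : ∀ θ t, ‖t‖ ≤ ε → γ θ + t ∈ V) :
    DifferentiableOn ℂ (fun t => ∫ θ in (0:ℝ)..(2 * Real.pi), c θ * f (γ θ + t)) (ball 0 ε) := by
  intro t0 ht0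
  apply DifferentiableAt.differentiableWithinAt
  have : ProperSpace E := FiniteDimensional.proper ℂ E
  borelize E
  have ht0' : ‖t0‖ < ε := by simpa using ht0
  set η := (ε - ‖t0‖) / 2 with hη
  have hηpos : 0 < η := by rw [hη]; linarith
  have hcomp : IsCompact ((fun q : ℝ × E => γ q.1 + q.2) ''
      (Icc (0:ℝ) (2 * Real.pi) ×ˢ closedBall (0:E) ε)) :=
    (isCompact_Icc.prod (isCompact_closedBall _ _)).image (by fun_prop)
  have hsub : ((fun q : ℝ × E => γ q.1 + q.2) ''
      (Icc (0:ℝ) (2 * Real.pi) ×ˢ closedBall (0:E) ε)) ⊆ V := by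
    rintro _ ⟨⟨θ, t⟩, ⟨_, ht⟩, rfl⟩
    exact h θ t (by simpa using ht)
  obtain ⟨M, hM⟩ := hcomp.exists_bound_of_continuousOn (hf.continuousOn.mono hsub)
  have hcont : ∀ t ∈ ball t0 η, Continuous (fun θ => f (γ θ + t)) := by
    intro t ht
    have ht' : ‖t‖ ≤ ε := by
      have : ‖t‖ ≤ ‖t - t0‖ + ‖t0‖ := by simpa using norm_add_le (t - t0) t0
      rw [mem_ball, dist_eq_norm] at ht
      linarith
    exact hf.continuousOn.comp_continuous (by fun_prop) (fun θ => h θ t ht')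
  have hbd : ∀ θ ∈ Icc (0:ℝ) (2 * Real.pi), ∀ t ∈ ball t0 η,
      ‖fderiv ℂ f (γ θ + t)‖ ≤ (2 * M) / η := by
    intro θ hθ t ht
    rw [mem_ball, dist_eq_norm] at ht
    have ht' : ‖t‖ ≤ ‖t - t0‖ + ‖t0‖ := by simpa using norm_add_le (t - t0) t0
    have key : ∀ y ∈ ball (γ θ + t) η, ‖y - γ θ‖ ≤ ε := by
      intro y hy
      rw [mem_ball, dist_eq_norm] at hy
      have : ‖y - γ θ‖ ≤ ‖y - (γ θ + t)‖ + ‖t‖ := by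
        have := norm_add_le (y - (γ θ + t)) t
        rwa [show y - (γ θ + t) + t = y - γ θ by abel] at this
      linarith
    have hyM : ∀ y ∈ ball (γ θ + t) η, ‖f y‖ ≤ M := by
      intro y hy
      apply hM
      refine ⟨(θ, y - γ θ), ⟨hθ, by simpa using key y hy⟩, by simp⟩
    apply Complex.norm_fderiv_le_div_of_mapsTo_ball _ _ hηpos
    · apply hf.mono
      intro y hy
      simpa using h θ (y - γ θ) (key y hy)
    · intro y hy
      rw [mem_closedBall, dist_eq_norm]
      have h1 := hyM y hy
      have h2 := hyM _ (mem_ball_self hηpos)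
      have := norm_sub_le (f y) (f (γ θ + t))
      linarith
  have hmem : ∀ θ, ∀ t ∈ ball t0 η, γ θ + t ∈ V := by
    intro θ t ht
    apply h
    have : ‖t‖ ≤ ‖t - t0‖ + ‖t0‖ := by simpa using norm_add_le (t - t0) t0
    rw [mem_ball, dist_eq_norm] at ht
    linarith
  have hIoc : ∀ θ ∈ Ι (0:ℝ) (2 * Real.pi), θ ∈ Icc (0:ℝ) (2 * Real.pi) := by
    intro θ hθ
    rw [uIoc_of_le (by positivity)] at hθ
    exact Ioc_subset_Icc_self hθ
  refine (intervalIntegral.hasFDerivAt_integral_of_dominated_of_fderiv_le (μ := MeasureTheory.volume) (𝕜 := ℂ)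
    (F := fun t θ => c θ * f (γ θ + t)) (F' := fun t θ => c θ • fderiv ℂ f (γ θ + t))
    (bound := fun θ => ‖c θ‖ * (2 * M / η))
    (ball_mem_nhds t0 hηpos) ?_ ?_ ?_ ?_ ?_ ?_).differentiableAt
  · filter_upwards [ball_mem_nhds t0 hηpos] with t ht
    exact (hc.mul (hcont t ht)).aestronglyMeasurable
  · exact (hc.mul (hcont t0 (mem_ball_self hηpos))).intervalIntegrable _ _
  · apply MeasureTheory.AEStronglyMeasurable.smul hc.aestronglyMeasurable
    have hmeas : Measurable (fun θ => fderiv ℂ f (γ θ + t0)) :=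
      (measurable_fderiv ℂ f).comp (by fun_prop : Continuous (fun θ => γ θ + t0)).measurable
    have : FiniteDimensional ℂ (E →L[ℂ] ℂ) := inferInstance
    have : ProperSpace (E →L[ℂ] ℂ) := FiniteDimensional.proper ℂ _
    exact hmeas.stronglyMeasurable.aestronglyMeasurable
  · filter_upwards with θ hθ t ht
    rw [norm_smul]
    gcongr
    exact hbd θ (hIoc θ hθ) t ht
  · exact Continuous.intervalIntegrable (by fun_prop) _ _
  · filter_upwards with θ hθ t ht
    have h1 := ((hf _ (hmem θ t ht)).differentiableAt (hV.mem_nhds (hmem θ t ht))).hasFDerivAt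
    have h2 : HasFDerivAt (fun t => γ θ + t) (ContinuousLinearMap.id ℂ E) t :=
      (hasFDerivAt_id t).const_add _
    have h3 := (h1.comp t h2).const_smul (c θ)
    rw [ContinuousLinearMap.comp_id] at h3
    exact h3
  
lemma identity_thm {E : Type*} [NormedAddCommGroup E] [NormedSpace ℂ E]
    {W : Set E} (hW : IsOpen W) (hWc : IsPreconnected W) {f g : E → ℂ}
    (hf : DifferentiableOn ℂ f W) (hg : DifferentiableOn ℂ g W) {z0 : E} (hz0 : z0 ∈ W)
    (h : f =ᶠ[𝓝 z0] g) : EqOn f g W := by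
  set A : Set E := {z | f =ᶠ[𝓝 z] g} with hA
  have hAo : IsOpen A := isOpen_setOfPred_eventually_nhds
  have hsub : W ⊆ A := by
    apply hWc.subset_of_closure_inter_subset hAo ⟨z0, hz0, h⟩
    rintro z ⟨hzc, hzW⟩
    obtain ⟨R, hR, hRW⟩ := Metric.isOpen_iff.1 hW z hzW
    obtain ⟨a, haA, haz⟩ := Metric.mem_closure_iff.1 hzc R hR
    have haB : a ∈ ball z R := by rwa [mem_ball, dist_comm]
    have : ball z R ⊆ {y | f y = g y} := by
      intro b hb
      set L : ℂ → E := fun s => a + s • (b - a) with hL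
      have hLd : Differentiable ℂ L := by
        intro s; simp only [hL]; fun_prop
      have hS : Convex ℝ (L ⁻¹' ball z R) := by
        have := ((convex_ball z R).translate_preimage_right a).linear_preimage
          ((LinearMap.toSpanSingleton ℂ E (b - a)).restrictScalars ℝ)
        exact this
      have hSo : IsOpen (L ⁻¹' ball z R) := isOpen_ball.preimage hLd.continuous
      have h1 : AnalyticOnNhd ℂ (f ∘ L) (L ⁻¹' ball z R) :=
        ((hf.mono hRW).comp hLd.differentiableOn (fun _ h => h)).analyticOnNhd hSo
      have h2 : AnalyticOnNhd ℂ (g ∘ L) (L ⁻¹' ball z R) :=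
        ((hg.mono hRW).comp hLd.differentiableOn (fun _ h => h)).analyticOnNhd hSo
      have h0 : L 0 = a := by simp [hL]
      have h11 : L 1 = b := by simp [hL]
      have := h1.eqOn_of_preconnected_of_eventuallyEq h2 hS.isPreconnected (z₀ := 0)
        (by simpa [h0] using haB)
        (by
          have ht : Tendsto L (𝓝 0) (𝓝 a) := by
            have := hLd.continuous.tendsto 0
            rwa [h0] at this
          exact ht.eventually haA)
      have := this (show (1:ℂ) ∈ _ by simpa [h11] using hb)
      simpa [h11] using this
    exact Filter.mem_of_superset (ball_mem_nhds z hR) this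
  intro z hz
  exact (hsub hz).self_of_nhds

def AdhProp (E : Type) [NormedAddCommGroup E] [NormedSpace ℝ E] : Prop :=
  ∀ g : E → ℂ, AnalyticAt ℝ g 0 → ∀ s ∈ 𝓝 (0 : E), ∀ᶠ x in 𝓝 (0 : E), g x ≠ 0 →
    (0 : E) ∈ closure (connectedComponentIn (s ∩ {z | g z ≠ 0}) x)

lemma comp_extend {X : Type*} [TopologicalSpace X] {A S : Set X} {z q : X}
    (hq : q ∈ connectedComponentIn A z) (hS : IsPreconnected S) (hSA : S ⊆ A) (hqS : q ∈ S) :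
    S ⊆ connectedComponentIn A z := by
  rw [connectedComponentIn_eq hq]
  exact hS.subset_connectedComponentIn hqS hSA

lemma adh_step {E : Type} [NormedAddCommGroup E] [NormedSpace ℝ E]
    (hE : AdhProp E) {g : E × ℝ → ℂ} (hg : AnalyticAt ℝ g 0)
    (hg0 : ¬ ∀ᶠ t in 𝓝 (0:ℝ), g (0, t) = 0)
    {Δ : E → ℂ} (hΔ : AnalyticAt ℝ Δ 0) (hΔ0 : ¬ ∀ᶠ x in 𝓝 (0:E), Δ x = 0)
    {C r₀ : ℝ} (hr₀ : 0 < r₀)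
    (hsep : ∀ᶠ x in 𝓝 (0:E), ∀ α β : ℝ, |α| < r₀ → |β| < r₀ → α ≠ β → g (x, α) = 0 →
      g (x, β) = 0 → ‖Δ x‖ ≤ C * |α - β|)
    {s : Set (E × ℝ)} (hs : s ∈ 𝓝 (0 : E × ℝ)) :
    ∀ᶠ x in 𝓝 (0 : E × ℝ), g x ≠ 0 →
    (0 : E × ℝ) ∈ closure (connectedComponentIn (s ∩ {z | g z ≠ 0}) x) := by
  -- constants
  obtain ⟨ρ, hρ, hρ1⟩ : ∃ ρ > 0, ∀ q ∈ ball (0 : E × ℝ) ρ, ContinuousAt g q ∧ q ∈ s := by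
    have h1 : ∀ᶠ q in 𝓝 (0 : E × ℝ), ContinuousAt g q ∧ q ∈ s :=
      (hg.eventually_analyticAt.mono (fun q hq => hq.continuousAt)).and hs
    exact Metric.eventually_nhds_iff_ball.1 h1
  have hmemρ : ∀ (x : E) (t : ℝ), ‖x‖ < ρ → |t| < ρ → (x, t) ∈ ball (0 : E × ℝ) ρ := by
    intro x t hx ht
    rw [mem_ball_zero_iff, Prod.norm_def]
    exact max_lt hx (by simpa using ht)
  have hg0' : ∀ᶠ t in 𝓝[≠] (0:ℝ), g (0, t) ≠ 0 := by
    have h1 : AnalyticAt ℝ (fun t : ℝ => g ((0 : E), t)) 0 := by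
      apply AnalyticAt.fun_comp (g := g)
      · exact hg
      · exact analyticAt_const.prod analyticAt_id
    exact h1.eventually_eq_zero_or_eventually_ne_zero.resolve_left hg0
  obtain ⟨r₁, hr₁, hr₁'⟩ : ∃ r > 0, ∀ t : ℝ, |t| < r → t ≠ 0 → g (0, t) ≠ 0 := by
    rw [eventually_nhdsWithin_iff, Metric.eventually_nhds_iff] at hg0'
    obtain ⟨r, hr, h⟩ := hg0'
    exact ⟨r, hr, fun t ht hne => h (by simpa using ht) hne⟩
  obtain ⟨r, hr, hrρ, hrr₁, hrr₀⟩ : ∃ r > 0, r < ρ ∧ r < r₁ ∧ r < r₀ := by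
    refine ⟨min ρ (min r₁ r₀) / 2, by positivity, ?_, ?_, ?_⟩
    · have := min_le_left ρ (min r₁ r₀); linarith
    · have := (min_le_right ρ (min r₁ r₀)).trans (min_le_left _ _); linarith
    · have := (min_le_right ρ (min r₁ r₀)).trans (min_le_right _ _); linarith
  have htube : ∀ η > 0, ∀ᶠ x in 𝓝 (0:E), ∀ t ∈ {t : ℝ | η ≤ |t|} ∩ Icc (-r) r, g (x, t) ≠ 0 := by
    intro η hη
    apply IsCompact.eventually_forall_of_forall_eventually
    · exact isCompact_Icc.inter_left (isClosed_le continuous_const continuous_abs)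
    · rintro t ⟨ht1, ht2⟩
      have ht2' : |t| ≤ r := abs_le.2 ht2
      have ht0 : t ≠ 0 := by
        rintro rfl
        simp at ht1; linarith
      exact (hρ1 _ (hmemρ 0 t (by simpa using hρ) (by linarith))).1.eventually_ne
        (hr₁' t (by linarith) ht0)
  obtain ⟨δ, hδ, hδρ, hδΔ, hδsep, hδtube⟩ : ∃ δ > 0, δ ≤ ρ ∧ (∀ x ∈ ball (0:E) δ, AnalyticAt ℝ Δ x) ∧
      (∀ x ∈ ball (0:E) δ, ∀ α β : ℝ, |α| < r₀ → |β| < r₀ → α ≠ β → g (x, α) = 0 →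
      g (x, β) = 0 → ‖Δ x‖ ≤ C * |α - β|) ∧
      (∀ x ∈ ball (0:E) δ, ∀ t ∈ {t : ℝ | r / 2 ≤ |t|} ∩ Icc (-r) r, g (x, t) ≠ 0) := by
    obtain ⟨δ, hδ, h⟩ := Metric.eventually_nhds_iff_ball.1
      (hΔ.eventually_analyticAt.and (hsep.and (htube (r / 2) (by positivity))))
    refine ⟨min δ ρ, lt_min hδ hρ, min_le_right _ _, ?_, ?_, ?_⟩
    · exact fun x hx => (h x (ball_subset_ball (min_le_left _ _) hx)).1
    · exact fun x hx => (h x (ball_subset_ball (min_le_left _ _) hx)).2.1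
    · exact fun x hx => (h x (ball_subset_ball (min_le_left _ _) hx)).2.2
  set A : Set (E × ℝ) := (ball 0 δ ×ˢ ball 0 r) ∩ {z | g z ≠ 0} with hA
  have hmemA : ∀ (x : E) (t : ℝ), (x, t) ∈ A ↔ x ∈ ball (0:E) δ ∧ |t| < r ∧ g (x, t) ≠ 0 := by
    intro x t
    simp [hA, and_assoc]
  have hca : ∀ x ∈ ball (0:E) δ, ∀ t : ℝ, |t| < r → ContinuousAt g (x, t) := by
    intro x hx t ht
    rw [mem_ball_zero_iff] at hx
    exact (hρ1 _ (hmemρ x t (by linarith) (by linarith))).1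
  have hAo : IsOpen A := by
    apply ContinuousOn.isOpen_inter_preimage _ (isOpen_ball.prod isOpen_ball) isOpen_ne
    rintro ⟨x, t⟩ ⟨hx, ht⟩
    exact (hca x hx t (by simpa using ht)).continuousWithinAt
  have hAs : A ⊆ s ∩ {z | g z ≠ 0} := by
    rintro ⟨x, t⟩ ⟨⟨hx, ht⟩, hne⟩
    refine ⟨(hρ1 _ (hmemρ x t ?_ ?_)).2, hne⟩
    · simp at hx; linarith
    · simp at ht; linarith
  -- vertical and horizontal moves
  have hvert : ∀ z x t t', (x, t) ∈ connectedComponentIn A z → |t'| < r →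
      (∀ τ ∈ uIcc t t', g (x, τ) ≠ 0) → (x, t') ∈ connectedComponentIn A z := by
    intro z x t t' hW ht' hτ
    have hxt := (hmemA x t).1 (connectedComponentIn_subset _ _ hW)
    have hpre : IsPreconnected ((fun τ : ℝ => (x, τ)) '' uIcc t t') :=
      isPreconnected_uIcc.image _ (by fun_prop)
    refine comp_extend hW hpre ?_ ⟨t, left_mem_uIcc, rfl⟩ ⟨t', right_mem_uIcc, rfl⟩
    rintro _ ⟨τ, hτm, rfl⟩
    refine (hmemA x τ).2 ⟨hxt.1, ?_, hτ τ hτm⟩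
    have h1 : uIcc t t' ⊆ Ioo (-r) r :=
      (convex_Ioo (-r) r).ordConnected.uIcc_subset (abs_lt.1 hxt.2.1) (abs_lt.1 ht')
    exact abs_lt.2 (h1 hτm)
  have hhor : ∀ z x x' t S, (x, t) ∈ connectedComponentIn A z → Convex ℝ S → x ∈ S → x' ∈ S →
      S ⊆ ball (0:E) δ → (∀ y ∈ S, g (y, t) ≠ 0) → (x', t) ∈ connectedComponentIn A z := by
    intro z x x' t S hW hS hx hx' hSb hne
    have hxt := (hmemA x t).1 (connectedComponentIn_subset _ _ hW)
    have hpre : IsPreconnected ((fun y : E => (y, t)) '' S) :=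
      hS.isPreconnected.image _ (by fun_prop)
    refine comp_extend hW hpre ?_ ⟨x, hx, rfl⟩ ⟨x', hx', rfl⟩
    rintro _ ⟨y, hy, rfl⟩
    exact (hmemA y t).2 ⟨hSb hy, hxt.2.1, hne y hy⟩
  -- Claim 1
  have claim1 : ∀ z, (0:E) ∈ closure (Prod.fst '' connectedComponentIn A z) →
      (0 : E × ℝ) ∈ closure (connectedComponentIn A z) := by
    intro z hz
    rw [Metric.mem_closure_iff]
    intro e he
    set η := min (e / 2) (r / 2) with hη
    have hηpos : 0 < η := by positivity
    have hηe : η ≤ e / 2 := min_le_left _ _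
    have hηr : η ≤ r / 2 := min_le_right _ _
    obtain ⟨κ, hκ, hκ'⟩ := Metric.eventually_nhds_iff_ball.1 (htube η hηpos)
    obtain ⟨_, ⟨⟨x, t⟩, hxt, rfl⟩, hd⟩ := Metric.mem_closure_iff.1 hz (min κ e) (lt_min hκ he)
    have hxn : ‖x‖ < min κ e := by simpa using hd
    have hxκ : x ∈ ball (0:E) κ := by simpa using hxn.trans_le (min_le_left _ _)
    have hxe : ‖x‖ < e := hxn.trans_le (min_le_right _ _)
    have hxtA := (hmemA x t).1 (connectedComponentIn_subset _ _ hxt)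
    have hfin : ∀ t', (x, t') ∈ connectedComponentIn A z → |t'| < e →
        ∃ b ∈ connectedComponentIn A z, dist (0 : E × ℝ) b < e := by
      intro t' h1 h2
      refine ⟨_, h1, ?_⟩
      rw [dist_zero_left, Prod.norm_def]
      exact max_lt hxe (by simpa using h2)
    by_cases hte : |t| < e
    · exact hfin t hxt hte
    push Not at hte
    have htr := abs_lt.1 hxtA.2.1
    rcases le_total 0 t with h0 | h0
    · rw [abs_of_nonneg h0] at hte
      refine hfin η (hvert z x t η hxt (by rw [abs_of_pos hηpos]; linarith) ?_)
        (by rw [abs_of_pos hηpos]; linarith)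
      intro τ hτ
      rw [uIcc_of_ge (by linarith)] at hτ
      refine hκ' x hxκ τ ⟨?_, ?_, ?_⟩
      · exact hτ.1.trans (le_abs_self τ)
      · linarith [hτ.1]
      · linarith [hτ.2]
    · rw [abs_of_nonpos h0] at hte
      refine hfin (-η) (hvert z x t (-η) hxt (by rw [abs_neg, abs_of_pos hηpos]; linarith) ?_)
        (by rw [abs_neg, abs_of_pos hηpos]; linarith)
      intro τ hτ
      rw [uIcc_of_le (by linarith)] at hτ
      refine hκ' x hxκ τ ⟨?_, ?_, ?_⟩
      · have := neg_abs_le τ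
        show η ≤ |τ|
        linarith [neg_le_abs τ, hτ.2]
      · linarith [hτ.1]
      · linarith [hτ.2]
  -- Claim 2
  have claim2 : ∀ z, ∀ x₀ ∈ ball (0:E) δ, Δ x₀ ≠ 0 →
      x₀ ∈ closure (Prod.fst '' connectedComponentIn A z) →
      x₀ ∈ Prod.fst '' connectedComponentIn A z := by
    intro z x₀ hx₀ hΔx₀ hcl
    by_contra hnot
    have hnot' : ∀ t, (x₀, t) ∉ connectedComponentIn A z := fun t ht => hnot ⟨_, ht, rfl⟩
    have hsmall : ∀ x t, (x, t) ∈ connectedComponentIn A z → |t| < r / 2 := by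
      intro x t hxt
      by_contra hge
      push Not at hge
      have hxtA := (hmemA x t).1 (connectedComponentIn_subset _ _ hxt)
      refine hnot' t (hhor z x x₀ t (ball 0 δ) hxt (convex_ball _ _) hxtA.1 hx₀ subset_rfl ?_)
      intro y hy
      exact hδtube y hy t ⟨hge, abs_le.1 hxtA.2.1.le⟩
    set m := ‖Δ x₀‖ with hm
    have hmpos : 0 < m := norm_pos_iff.2 hΔx₀
    set D := |C| + 1 with hD
    have hDpos : 0 < D := by positivity
    have hCD : ∀ u : ℝ, C * |u| ≤ D * |u| := by
      intro u
      gcongr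
      exact (le_abs_self C).trans (by linarith)
    set η := min (m / (8 * D)) (r / 3) with hη
    have hηpos : 0 < η := by positivity
    have hηr : η ≤ r / 3 := min_le_right _ _
    have hηm : D * (2 * η) ≤ m / 4 := by
      have : η ≤ m / (8 * D) := min_le_left _ _
      calc D * (2 * η) ≤ D * (2 * (m / (8 * D))) := by gcongr
        _ = m / 4 := by field_simp; ring
    -- nonzeros close to any given place
    have hnonzero : ∀ u v : ℝ, u < v → v - u ≤ η → -r < u → v < r →
        ∃ τ ∈ Ioo u v, g (x₀, τ) ≠ 0 := by
      intro u v huv huv' hu hv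
      by_contra hall
      push Not at hall
      have h1 := hδsep x₀ hx₀ (u + (v - u) / 3) (u + (v - u) / 2)
        (by rw [abs_lt]; constructor <;> linarith) (by rw [abs_lt]; constructor <;> linarith)
        (by intro h; linarith) (hall _ ⟨by linarith, by linarith⟩)
        (hall _ ⟨by linarith, by linarith⟩)
      have h2 := h1.trans (hCD _)
      have h3 : |u + (v - u) / 3 - (u + (v - u) / 2)| ≤ 2 * η := by
        rw [abs_le]; constructor <;> linarith
      have h4 : D * |u + (v - u) / 3 - (u + (v - u) / 2)| ≤ D * (2 * η) := by gcongr
      linarith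
    obtain ⟨w, hw, hwlim⟩ := mem_closure_iff_seq_limit.1 hcl
    choose q hq hqw using hw
    have htk : ∀ k, (q k).2 ∈ Icc (-(r / 2)) (r / 2) := fun k =>
      abs_le.1 (hsmall (q k).1 (q k).2 (hq k)).le
    obtain ⟨t₀, ht₀, ψ, hψ, hlim⟩ := isCompact_Icc.tendsto_subseq htk
    obtain ⟨τ₁, hτ₁, hg₁⟩ := hnonzero (t₀ - η) t₀ (by linarith) (by linarith)
      (by linarith [ht₀.1]) (by linarith [ht₀.2])
    obtain ⟨τ₂, hτ₂, hg₂⟩ := hnonzero t₀ (t₀ + η) (by linarith) (by linarith)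
      (by linarith [ht₀.1]) (by linarith [ht₀.2])
    have hτ₁r : |τ₁| < r := by
      rw [abs_lt]; constructor <;> linarith [ht₀.1, ht₀.2, hτ₁.1, hτ₁.2]
    have hτ₂r : |τ₂| < r := by
      rw [abs_lt]; constructor <;> linarith [ht₀.1, ht₀.2, hτ₂.1, hτ₂.2]
    have hnear : ∀ τ, |τ| < r → g (x₀, τ) ≠ 0 → ∀ᶠ x in 𝓝 x₀, g (x, τ) ≠ 0 := by
      intro τ hτ hgτ
      have h1 : ContinuousAt (fun x : E => g (x, τ)) x₀ :=
        ContinuousAt.comp (f := fun x : E => (x, τ)) (hca x₀ hx₀ τ hτ) (by fun_prop)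
      exact h1.eventually_ne hgτ
    have hΔnear : ∀ᶠ x in 𝓝 x₀, m / 2 < ‖Δ x‖ :=
      (hδΔ x₀ hx₀).continuousAt.norm.eventually (lt_mem_nhds (by linarith))
    obtain ⟨κ, hκ, hκ'⟩ := Metric.eventually_nhds_iff_ball.1
      ((hnear τ₁ hτ₁r hg₁).and ((hnear τ₂ hτ₂r hg₂).and (hΔnear.and (isOpen_ball.mem_nhds hx₀))))
    have hqlim : Tendsto (fun k => (q (ψ k)).1) atTop (𝓝 x₀) := by
      simp only [hqw]
      exact hwlim.comp hψ.tendsto_atTop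
    obtain ⟨k, hk1, hk2⟩ := ((hqlim.eventually (ball_mem_nhds x₀ hκ)).and
      (hlim.eventually (Ioo_mem_nhds hτ₁.2 hτ₂.1))).exists
    have hqk := hq (ψ k)
    set x := (q (ψ k)).1 with hx
    set t := (q (ψ k)).2 with ht
    have hxt : (x, t) ∈ connectedComponentIn A z := hqk
    have hk2' : t ∈ Ioo τ₁ τ₂ := hk2
    have hxtA := (hmemA x t).1 (connectedComponentIn_subset _ _ hxt)
    have hzero : ∀ τ, |τ| < r → (∀ y ∈ ball x₀ κ, g (y, τ) ≠ 0) → ∃ α ∈ uIcc t τ, g (x, α) = 0 := by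
      intro τ hτ hy
      by_contra hno
      push Not at hno
      have h1 := hvert z x t τ hxt hτ hno
      exact hnot' τ (hhor z x x₀ τ (ball x₀ κ) h1 (convex_ball _ _) hk1 (mem_ball_self hκ)
        (fun y hy => (hκ' y hy).2.2.2) hy)
    obtain ⟨α, hα, hgα⟩ := hzero τ₁ hτ₁r (fun y hy => (hκ' y hy).1)
    obtain ⟨β, hβ, hgβ⟩ := hzero τ₂ hτ₂r (fun y hy => (hκ' y hy).2.1)
    rw [uIcc_of_ge hk2'.1.le] at hα
    rw [uIcc_of_le hk2'.2.le] at hβ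
    have hαt : α ≠ t := fun h => hxtA.2.2 (h ▸ hgα)
    have hαβ : α < β := (lt_of_le_of_ne hα.2 hαt).trans_le hβ.1
    have hαr : |α| < r := by
      rw [abs_lt] at hτ₁r hτ₂r ⊢; constructor <;> linarith [hα.1, hα.2, hk2'.1, hk2'.2]
    have hβr : |β| < r := by
      rw [abs_lt] at hτ₁r hτ₂r ⊢; constructor <;> linarith [hβ.1, hβ.2, hk2'.1, hk2'.2]
    have h1 := (hδsep x hxtA.1 α β (by linarith) (by linarith) hαβ.ne hgα hgβ).trans (hCD _)
    have h3 : |α - β| ≤ 2 * η := by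
      rw [abs_le]
      constructor <;> linarith [hα.1, hβ.2, hτ₁.1, hτ₂.2]
    have h4 : D * |α - β| ≤ D * (2 * η) := by gcongr
    have h5 := (hκ' x hk1).2.2.1
    linarith
  -- conclusion
  obtain ⟨κ, hκ, hκ'⟩ := Metric.eventually_nhds_iff_ball.1 (hE Δ hΔ (ball 0 δ) (ball_mem_nhds 0 hδ))
  have hev : ∀ᶠ q in 𝓝 (0 : E × ℝ), q ∈ ball (0:E) (min κ δ) ×ˢ ball (0:ℝ) r :=
    (isOpen_ball.prod isOpen_ball).mem_nhds
      ⟨mem_ball_self (lt_min hκ hδ), mem_ball_self hr⟩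
  filter_upwards [hev] with z hz hgz
  have hzA : z ∈ A := ⟨⟨ball_subset_ball (min_le_right _ _) hz.1, hz.2⟩, hgz⟩
  have hWo : IsOpen (connectedComponentIn A z) := hAo.connectedComponentIn
  have hW'o : IsOpen (Prod.fst '' connectedComponentIn A z) := isOpenMap_fst _ hWo
  have hz1 : z.1 ∈ Prod.fst '' connectedComponentIn A z := ⟨z, mem_connectedComponentIn hzA, rfl⟩
  have hfreq : ¬ ∀ᶠ x in 𝓝 z.1, Δ x = 0 := by
    intro hcon
    apply hΔ0
    have h1 := (show AnalyticOnNhd ℝ Δ (ball 0 δ) from hδΔ).eqOn_zero_of_preconnected_of_eventuallyEq_zero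
      (convex_ball _ _).isPreconnected hzA.1.1 hcon
    filter_upwards [ball_mem_nhds (0:E) hδ] with x hx using h1 hx
  have hfreq' : ∃ᶠ x in 𝓝 z.1, Δ x ≠ 0 := Filter.not_eventually.1 hfreq
  obtain ⟨x₂, hx₂Δ, hx₂W, hx₂b⟩ := (hfreq'.and_eventually
    ((hW'o.eventually_mem hz1).and (isOpen_ball.eventually_mem hz.1) :
      ∀ᶠ x in 𝓝 z.1, x ∈ Prod.fst '' connectedComponentIn A z ∧ x ∈ ball (0:E) (min κ δ))).exists
  have hcl := hκ' x₂ (ball_subset_ball (min_le_left _ _) hx₂b) hx₂Δ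
  have hsubW : connectedComponentIn (ball 0 δ ∩ {x | Δ x ≠ 0}) x₂ ⊆
      Prod.fst '' connectedComponentIn A z := by
    apply isPreconnected_connectedComponentIn.subset_of_closure_inter_subset hW'o
    · exact ⟨x₂, mem_connectedComponentIn ⟨ball_subset_ball (min_le_right _ _) hx₂b, hx₂Δ⟩, hx₂W⟩
    · rintro y ⟨hy1, hy2⟩
      have := connectedComponentIn_subset _ _ hy2
      exact claim2 z y this.1 this.2 hy1
  exact closure_mono (connectedComponentIn_mono z hAs) (claim1 z (closure_mono hsubW hcl))

lemma arg_principle_aux {r : ℝ} (hr : 0 < r) (Z : Finset ℂ) : ∀ h : ℂ → ℂ,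
    AnalyticOnNhd ℂ h (closedBall 0 r) → (∀ w ∈ closedBall (0:ℂ) r, h w = 0 ↔ w ∈ Z) →
    (∀ w ∈ Z, w ∈ ball (0:ℂ) r) →
    ∃ m : ℂ → ℕ, (∀ a ∈ Z, 0 < m a) ∧ ∀ k : ℕ, (∮ w in C(0, r), w ^ k * (deriv h w / h w)) =
      2 * Real.pi * Complex.I * ∑ a ∈ Z, (m a : ℂ) * a ^ k := by
  classical
  induction Z using Finset.induction_on with
  | empty =>
    intro h hh hz _
    refine ⟨fun _ => 0, by simp, fun k => ?_⟩
    have hd : ∀ w ∈ closedBall (0:ℂ) r, DifferentiableAt ℂ (fun w => w ^ k * (deriv h w / h w)) w := by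
      intro w hw
      have h1 := (hh w hw).differentiableAt
      have h2 := (hh w hw).deriv.differentiableAt
      have h3 : h w ≠ 0 := by simpa using (hz w hw).not.2 (by simp)
      exact (differentiableAt_id.pow k).mul (h2.div h1 h3)
    rw [Complex.circleIntegral_eq_zero_of_differentiable_on_off_countable hr.le countable_empty]
    · simp
    · exact fun w hw => (hd w hw).continuousAt.continuousWithinAt
    · exact fun w hw => hd w (ball_subset_closedBall hw.1)
  | insert a Z haZ ih =>
    intro h hh hz hZ
    have ha : a ∈ ball (0:ℂ) r := hZ a (by simp)
    have hac := ball_subset_closedBall ha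
    have hha : h a = 0 := (hz a hac).2 (by simp)
    have hnz : ¬ ∀ᶠ z in 𝓝 a, h z = 0 := by
      intro hcon
      have h0 := hh.eqOn_zero_of_preconnected_of_eventuallyEq_zero
        (convex_closedBall _ _).isPreconnected hac hcon
      have hrm : (r:ℂ) ∈ closedBall (0:ℂ) r := by simp [abs_of_pos hr]
      have := hZ _ ((hz r hrm).1 (h0 hrm))
      simp [abs_of_pos hr] at this
    obtain ⟨n, g, hg, hga, hgh⟩ := (hh a hac).exists_eventuallyEq_pow_smul_nonzero_iff.2 hnz
    have hn : 0 < n := by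
      rcases Nat.eq_zero_or_pos n with rfl | hn
      · exfalso
        apply hga
        have := hgh.self_of_nhds
        simpa [hha] using this.symm
      · exact hn
    set h1 : ℂ → ℂ := fun w => if w = a then g a else h w / (w - a) ^ n with hh1
    have hfac : ∀ w, h w = (w - a) ^ n * h1 w := by
      intro w
      by_cases hw : w = a
      · subst hw; simp [hha, hn.ne']
      · have : w - a ≠ 0 := sub_ne_zero.2 hw
        simp only [hh1, hw, if_false]
        field_simp
    have h1a : h1 a = g a := by simp [hh1]
    have h1g : h1 =ᶠ[𝓝 a] g := by
      filter_upwards [hgh] with w hw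
      by_cases hwa : w = a
      · rw [hwa, h1a]
      · have : w - a ≠ 0 := sub_ne_zero.2 hwa
        simp only [hh1, hwa, if_false, hw, smul_eq_mul]
        field_simp
    have hh1an : AnalyticOnNhd ℂ h1 (closedBall 0 r) := by
      intro w hw
      by_cases hwa : w = a
      · subst hwa; exact hg.congr h1g.symm
      · have h2 : (fun w => h w / (w - a) ^ n) =ᶠ[𝓝 w] h1 := by
          filter_upwards [isOpen_ne.mem_nhds hwa] with y hy
          have hy' : y ≠ a := hy
          simp [hh1, hy']
        refine AnalyticAt.congr ?_ h2
        exact (hh w hw).fun_div ((analyticAt_id.sub analyticAt_const).fun_pow n)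
          (pow_ne_zero _ (sub_ne_zero.2 hwa))
    obtain ⟨m, hm, hmk⟩ := ih h1 hh1an (by
      intro w hw
      by_cases hwa : w = a
      · subst hwa; simp [h1a, hga, haZ]
      · rw [← show w ∈ insert a Z ↔ w ∈ Z by simp [hwa], ← hz w hw, hfac w]
        simp [sub_ne_zero.2 hwa]) (fun w hw => hZ w (by simp [hw]))
    refine ⟨fun b => if b = a then n else m b, ?_, ?_⟩
    · intro b hb
      by_cases hba : b = a
      · simp [hba, hn]
      · simp only [hba, if_false]; exact hm b (by simpa [hba] using hb)
    · intro k
      have hsph : ∀ w ∈ sphere (0:ℂ) r, w ^ k * (deriv h w / h w) =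
          (w - a)⁻¹ • (n * w ^ k) + w ^ k * (deriv h1 w / h1 w) := by
        intro w hw
        have hwc := sphere_subset_closedBall hw
        have hwb : w ∉ ball (0:ℂ) r := by
          simp at hw ⊢; linarith
        have hwa : w ≠ a := fun h => hwb (h ▸ ha)
        have hhw : h w ≠ 0 := fun h => hwb (hZ w ((hz w hwc).1 h))
        have hwa' : w - a ≠ 0 := sub_ne_zero.2 hwa
        have hh1w : h1 w ≠ 0 := by
          intro h0; apply hhw; rw [hfac, h0, mul_zero]
        have h3 : logDeriv h w = n / (w - a) + logDeriv h1 w := by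
          have : h = fun w => (w - a) ^ n * h1 w := funext hfac
          rw [this, logDeriv_mul (f := fun w => (w - a) ^ n) w (pow_ne_zero _ hwa') hh1w (by fun_prop)
            (hh1an w hwc).differentiableAt, logDeriv_fun_pow (by fun_prop)]
          simp [logDeriv_apply, div_eq_mul_inv]
        rw [logDeriv_apply, logDeriv_apply] at h3
        rw [h3, smul_eq_mul]
        field_simp
      have hc1 : CircleIntegrable (fun w => (w - a)⁻¹ • ((n:ℂ) * w ^ k)) 0 r := by
        apply ContinuousOn.circleIntegrable hr.le
        intro w hw
        have hwa : w - a ≠ 0 := by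
          rw [sub_ne_zero]; rintro rfl; simp at hw ha; linarith
        have : ContinuousAt (fun w => (w - a)⁻¹ • ((n:ℂ) * w ^ k)) w := by
          fun_prop (disch := exact hwa)
        exact this.continuousWithinAt
      have hc2 : CircleIntegrable (fun w => w ^ k * (deriv h1 w / h1 w)) 0 r := by
        apply ContinuousOn.circleIntegrable hr.le
        intro w hw
        have hwc := sphere_subset_closedBall hw
        have hhw : h1 w ≠ 0 := by
          intro h0
          have h2 : h w = 0 := by rw [hfac, h0, mul_zero]
          have := hZ w ((hz w hwc).1 h2)
          simp at this hw; linarith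
        exact ((continuousAt_id.pow k).mul ((hh1an w hwc).deriv.continuousAt.div
          (hh1an w hwc).continuousAt hhw)).continuousWithinAt
      rw [circleIntegral.integral_congr hr.le hsph, circleIntegral.integral_add hc1 hc2, hmk k,
        DifferentiableOn.circleIntegral_sub_inv_smul (by fun_prop) ha, Finset.sum_insert haZ]
      have hsum : ∑ b ∈ Z, ((if b = a then n else m b : ℕ) : ℂ) * b ^ k = ∑ b ∈ Z, (m b : ℂ) * b ^ k := by
        refine Finset.sum_congr rfl (fun b hb => ?_)
        have : b ≠ a := fun h => haZ (h ▸ hb)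
        simp [this]
      rw [hsum]
      simp only [smul_eq_mul, if_true]
      ring

lemma arg_principle {r : ℝ} (hr : 0 < r) {h : ℂ → ℂ} (hh : AnalyticOnNhd ℂ h (closedBall 0 r))
    (hne : ∀ w ∈ sphere (0:ℂ) r, h w ≠ 0) :
    ∃ (Z : Finset ℂ) (m : ℂ → ℕ), (∀ a ∈ Z, a ∈ ball (0:ℂ) r) ∧
      (∀ a ∈ ball (0:ℂ) r, h a = 0 → a ∈ Z) ∧ (∀ a ∈ Z, 0 < m a) ∧
      ∀ k : ℕ, (∮ w in C(0, r), w ^ k * (deriv h w / h w)) =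
      2 * Real.pi * Complex.I * ∑ a ∈ Z, (m a : ℂ) * a ^ k := by
  have hrm : (r:ℂ) ∈ sphere (0:ℂ) r := by simp [abs_of_pos hr]
  have hcod := hh.preimage_zero_mem_codiscreteWithin (hne r hrm) (sphere_subset_closedBall hrm)
    ⟨⟨0, by simp [hr.le]⟩, (convex_closedBall _ _).isPreconnected⟩
  have hfin := (isCompact_closedBall (0:ℂ) r).finite_sdiff_of_mem_codiscreteWithin hcod
  have hmem : ∀ w, w ∈ hfin.toFinset ↔ w ∈ closedBall (0:ℂ) r ∧ h w = 0 := by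
    intro w; simp
  have hZb : ∀ w ∈ hfin.toFinset, w ∈ ball (0:ℂ) r := by
    intro w hw
    rw [hmem] at hw
    rcases (ball_union_sphere (x := (0:ℂ)) (ε := r)).symm.subset hw.1 with h1 | h1
    · exact h1
    · exact absurd hw.2 (hne w h1)
  obtain ⟨m, hm, hmk⟩ := arg_principle_aux hr hfin.toFinset h hh
    (fun w hw => by rw [hmem]; simp only [hw, true_and]) hZb
  exact ⟨hfin.toFinset, m, hZb, fun a ha h0 => (hmem a).2 ⟨ball_subset_closedBall ha, h0⟩, hm, hmk⟩

lemma hankel_zero {P : ℕ → ℂ} {Z : Finset ℂ} {m : ℂ → ℕ}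
    (hP : ∀ k, P k = ∑ a ∈ Z, (m a : ℂ) * a ^ k) {k : ℕ} (hk : Z.card < k) :
    (Matrix.of fun i j : Fin k => P (i + j)).det = 0 := by
  classical
  by_contra hne
  have hfac : (Matrix.of fun i j : Fin k => P (i + j)) =
      (Matrix.of fun (i : Fin k) (a : Z) => (m a : ℂ) * (a : ℂ) ^ (i : ℕ)) *
      (Matrix.of fun (a : Z) (j : Fin k) => (a : ℂ) ^ (j : ℕ)) := by
    ext i j
    simp only [Matrix.of_apply, Matrix.mul_apply, hP]
    rw [← Finset.sum_coe_sort Z (fun a => (m a : ℂ) * a ^ ((i:ℕ) + (j:ℕ)))]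
    refine Finset.sum_congr rfl (fun a _ => ?_)
    rw [pow_add, mul_assoc]
  have hu := Matrix.rank_of_isUnit _ ((Matrix.isUnit_iff_isUnit_det _).2 (isUnit_iff_ne_zero.2 hne))
  rw [hfac] at hu
  have h1 := Matrix.rank_mul_le_left
      (Matrix.of fun (i : Fin k) (a : Z) => (m a : ℂ) * (a : ℂ) ^ (i : ℕ))
      (Matrix.of fun (a : Z) (j : Fin k) => (a : ℂ) ^ (j : ℕ))
  have h2 := Matrix.rank_le_card_width
      (Matrix.of fun (i : Fin k) (a : Z) => (m a : ℂ) * (a : ℂ) ^ (i : ℕ))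
  rw [hu] at h1
  simp at h1 h2
  omega

lemma hankel_eq {P : ℕ → ℂ} {Z : Finset ℂ} {m : ℂ → ℕ}
    (hP : ∀ k, P k = ∑ a ∈ Z, (m a : ℂ) * a ^ k) :
    (Matrix.of fun i j : Fin Z.card => P (i + j)).det =
      (∏ a ∈ Z, (m a : ℂ)) *
        (Matrix.vandermonde (fun i => ((Z.equivFin.symm i : Z) : ℂ))).det ^ 2 := by
  classical
  set v : Fin Z.card → ℂ := fun i => ((Z.equivFin.symm i : Z) : ℂ) with hv
  have hfac : (Matrix.of fun i j : Fin Z.card => P (i + j)) =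
      (Matrix.vandermonde v).transpose * Matrix.diagonal (fun i => (m (v i) : ℂ)) *
      Matrix.vandermonde v := by
    ext i j
    rw [Matrix.mul_apply]
    simp only [Matrix.of_apply, Matrix.mul_diagonal, Matrix.transpose_apply, Matrix.vandermonde_apply,
      hP]
    rw [← Finset.sum_coe_sort Z (fun a => (m a : ℂ) * a ^ ((i:ℕ) + (j:ℕ)))]
    rw [← Equiv.sum_comp Z.equivFin.symm]
    refine Finset.sum_congr rfl (fun a _ => ?_)
    simp only [hv, pow_add]; ring
  rw [hfac, Matrix.det_mul, Matrix.det_mul, Matrix.det_transpose, Matrix.det_diagonal]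
  have : ∏ i, (m (v i) : ℂ) = ∏ a ∈ Z, (m a : ℂ) := by
    rw [← Finset.prod_coe_sort Z, ← Equiv.prod_comp Z.equivFin.symm]
  rw [this]; ring

lemma hankel_ne {P : ℕ → ℂ} {Z : Finset ℂ} {m : ℂ → ℕ}
    (hP : ∀ k, P k = ∑ a ∈ Z, (m a : ℂ) * a ^ k) (hm : ∀ a ∈ Z, 0 < m a) :
    (Matrix.of fun i j : Fin Z.card => P (i + j)).det ≠ 0 := by
  rw [hankel_eq hP]
  refine mul_ne_zero (Finset.prod_ne_zero_iff.2 fun a ha => ?_) (pow_ne_zero _ ?_)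
  · exact_mod_cast (hm a ha).ne'
  · rw [Matrix.det_vandermonde_ne_zero_iff]
    exact Subtype.val_injective.comp Z.equivFin.symm.injective

lemma hankel_le {P : ℕ → ℂ} {Z : Finset ℂ} {m : ℂ → ℕ}
    (hP : ∀ k, P k = ∑ a ∈ Z, (m a : ℂ) * a ^ k) {D : ℝ} (hD : ∀ a ∈ Z, (m a : ℝ) ≤ D)
    (hZ : ∀ a ∈ Z, ‖a‖ ≤ 1 / 2) {α β : ℂ} (hα : α ∈ Z) (hβ : β ∈ Z) (hαβ : α ≠ β) :
    ‖(Matrix.of fun i j : Fin Z.card => P (i + j)).det‖ ≤ D ^ Z.card * ‖α - β‖ := by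
  classical
  rw [hankel_eq hP, norm_mul, norm_pow, norm_prod]
  set v : Fin Z.card → ℂ := fun i => ((Z.equivFin.symm i : Z) : ℂ) with hv
  have hvn : ∀ i j, ‖v i - v j‖ ≤ 1 := by
    intro i j
    have h1 := hZ _ (Z.equivFin.symm i).2
    have h2 := hZ _ (Z.equivFin.symm j).2
    calc ‖v i - v j‖ ≤ ‖v i‖ + ‖v j‖ := norm_sub_le _ _
      _ ≤ 1 := by simp only [hv]; linarith
  have hdet1 : ∀ i, ∏ j ∈ Finset.Ioi i, ‖v j - v i‖ ≤ 1 := fun i =>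
    Finset.prod_le_one (fun _ _ => norm_nonneg _) (fun j _ => hvn j i)
  have hdet : ‖(Matrix.vandermonde v).det‖ = ∏ i, ∏ j ∈ Finset.Ioi i, ‖v j - v i‖ := by
    rw [Matrix.det_vandermonde]; simp [norm_prod]
  have hle1 : ‖(Matrix.vandermonde v).det‖ ≤ 1 := by
    rw [hdet]
    exact Finset.prod_le_one (fun _ _ => Finset.prod_nonneg fun _ _ => norm_nonneg _)
      (fun i _ => hdet1 i)
  have hle2 : ∀ i j, i < j → ‖(Matrix.vandermonde v).det‖ ≤ ‖v j - v i‖ := by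
    intro i j hij
    rw [hdet, ← Finset.mul_prod_erase _ _ (Finset.mem_univ i),
      ← Finset.mul_prod_erase _ _ (Finset.mem_Ioi.2 hij), mul_assoc]
    refine mul_le_of_le_one_right (norm_nonneg _) (mul_le_one₀ ?_ ?_ ?_)
    · exact Finset.prod_le_one (fun _ _ => norm_nonneg _) (fun j _ => hvn j i)
    · exact Finset.prod_nonneg (fun _ _ => Finset.prod_nonneg fun _ _ => norm_nonneg _)
    · exact Finset.prod_le_one (fun _ _ => Finset.prod_nonneg fun _ _ => norm_nonneg _)
        (fun i _ => hdet1 i)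
  have hle3 : ‖(Matrix.vandermonde v).det‖ ≤ ‖α - β‖ := by
    have hvα : v (Z.equivFin ⟨α, hα⟩) = α := by simp [hv]
    have hvβ : v (Z.equivFin ⟨β, hβ⟩) = β := by simp [hv]
    have hne : Z.equivFin ⟨α, hα⟩ ≠ Z.equivFin ⟨β, hβ⟩ := by
      intro h; apply hαβ; rw [← hvα, ← hvβ, h]
    rcases lt_or_gt_of_ne hne with h | h
    · have := hle2 _ _ h
      rwa [hvα, hvβ, norm_sub_rev] at this
    · have := hle2 _ _ h
      rwa [hvα, hvβ] at this
  have hprod : ∏ a ∈ Z, ‖(m a : ℂ)‖ ≤ D ^ Z.card := by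
    rw [← Finset.prod_const]
    exact Finset.prod_le_prod (fun _ _ => norm_nonneg _) (fun a ha => by simpa using hD a ha)
  have hD0 : 0 ≤ D ^ Z.card := le_trans (Finset.prod_nonneg fun _ _ => norm_nonneg _) hprod
  have hsq : ‖(Matrix.vandermonde v).det‖ ^ 2 ≤ ‖α - β‖ := by
    rw [sq]
    exact (mul_le_of_le_one_right (norm_nonneg _) hle1).trans hle3
  gcongr

lemma superposition {K E : Type*} [TopologicalSpace K] [CompactSpace K] [NormedAddCommGroup E]
    [NormedSpace ℂ E] {G : E → ℂ} {p : FormalMultilinearSeries ℂ E ℂ}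
    {R : ENNReal} (hG : HasFPowerSeriesOnBall G p 0 R) :
    ∃ 𝒢 : C(K, E) → C(K, ℂ), ∀ u ∈ eball (0 : C(K, E)) R, AnalyticAt ℂ 𝒢 u ∧
      ∀ s, 𝒢 u s = G (u s) := by
  have hupd : ∀ {n : ℕ} [DecidableEq (Fin n)] (u : Fin n → C(K, E)) (i : Fin n) (x : C(K, E)) (s : K),
      (fun j => (Function.update u i x) j s) = Function.update (fun j => u j s) i (x s) := by
    intro n _ u i x s
    ext j
    by_cases hj : j = i
    · subst hj; simp
    · simp [hj]
  let q : FormalMultilinearSeries ℂ C(K, E) C(K, ℂ) := fun n =>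
    MultilinearMap.mkContinuous
      { toFun := fun u => ⟨fun s => p n (fun i => u i s), by fun_prop⟩
        map_update_add' := by
          intro _ u i x y
          ext s
          simp only [ContinuousMap.coe_mk, ContinuousMap.add_apply, hupd]
          exact (p n).map_update_add (fun i => u i s) i (x s) (y s)
        map_update_smul' := by
          intro _ u i c x
          ext s
          simp only [ContinuousMap.coe_mk, ContinuousMap.smul_apply, hupd]
          exact (p n).map_update_smul (fun i => u i s) i c (x s) }
      ‖p n‖ (by
        intro u
        refine (ContinuousMap.norm_le _ (by positivity)).2 (fun s => ?_)
        refine ((p n).le_opNorm _).trans ?_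
        gcongr
        exact ContinuousMap.norm_coe_le_norm _ _)
  have hqn : ∀ n, ‖q n‖ ≤ ‖p n‖ := fun n => MultilinearMap.mkContinuous_norm_le _ (norm_nonneg _) _
  have hqa : ∀ n (u : C(K, E)) s, q n (fun _ => u) s = p n (fun _ => u s) := fun n u s => rfl
  have hrad : R ≤ q.radius := by
    refine hG.r_le.trans ?_
    refine ENNReal.le_of_forall_nnreal_lt fun r hr => ?_
    obtain ⟨C, hC, h⟩ := p.norm_mul_pow_le_of_lt_radius hr
    exact q.le_radius_of_bound C (fun n => (mul_le_mul_of_nonneg_right (hqn n) (by positivity)).trans (h n))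
  have hq := (q.hasFPowerSeriesOnBall (hG.r_pos.trans_le hrad))
  refine ⟨q.sum, fun u hu => ⟨hq.analyticAt_of_mem (eball_subset_eball hrad hu), fun s => ?_⟩⟩
  have h1 := (q.hasSum (eball_subset_eball hrad hu)).mapL (ContinuousMap.evalCLM ℂ s)
  have h2 : HasSum (fun n => p n (fun _ => u s)) (G (0 + u s)) := by
    apply hG.hasSum
    rw [mem_eball_zero_iff] at hu ⊢
    refine lt_of_le_of_lt ?_ hu
    exact enorm_le_iff_norm_le.2 (ContinuousMap.norm_coe_le_norm u s)
  rw [zero_add] at h2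
  exact h1.unique h2

lemma circle_clm {r : ℝ} (hr : 0 ≤ r) : ∃ I : C(sphere (0:ℂ) r, ℂ) →L[ℂ] ℂ,
    ∀ (f : C(sphere (0:ℂ) r, ℂ)) (h : ℂ → ℂ), (∀ s, f s = h s) → I f = ∮ w in C(0, r), h w := by
  have hm : ∀ θ, circleMap 0 r θ ∈ sphere (0:ℂ) r := fun θ => circleMap_mem_sphere 0 hr θ
  let φ : C(ℝ, sphere (0:ℂ) r) := ⟨fun θ => ⟨circleMap 0 r θ, hm θ⟩, by fun_prop⟩
  have hcont : Continuous (deriv (circleMap 0 r)) := by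
    simp only [funext (deriv_circleMap 0 r)]; fun_prop
  have hint : ∀ f : C(sphere (0:ℂ) r, ℂ), IntervalIntegrable
      (fun θ => deriv (circleMap 0 r) θ * f (φ θ)) MeasureTheory.volume 0 (2 * Real.pi) := by
    intro f
    apply Continuous.intervalIntegrable
    exact hcont.mul (f.continuous.comp φ.continuous)
  let I : C(sphere (0:ℂ) r, ℂ) →ₗ[ℂ] ℂ :=
    { toFun := fun f => ∫ θ in (0:ℝ)..(2 * Real.pi), deriv (circleMap 0 r) θ * f (φ θ)
      map_add' := by
        intro f g
        rw [← intervalIntegral.integral_add (hint f) (hint g)]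
        simp only [ContinuousMap.add_apply, mul_add]
      map_smul' := by
        intro c f
        simp only [ContinuousMap.smul_apply, smul_eq_mul, RingHom.id_apply]
        rw [← intervalIntegral.integral_const_mul]
        congr 1; ext θ; ring }
  refine ⟨I.mkContinuous (r * |2 * Real.pi - 0|) ?_, ?_⟩
  · intro f
    have := intervalIntegral.norm_integral_le_of_norm_le_const (a := 0) (b := 2 * Real.pi)
      (f := fun θ => deriv (circleMap 0 r) θ * f (φ θ)) (C := r * ‖f‖) (by
        intro θ _
        rw [norm_mul]
        gcongr
        · simp [abs_of_nonneg hr]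
        · exact ContinuousMap.norm_coe_le_norm _ _)
    calc _ ≤ _ := this
      _ = _ := by ring
  · intro f h hfh
    show ∫ θ in (0:ℝ)..(2 * Real.pi), deriv (circleMap 0 r) θ * f (φ θ) = _
    rw [circleIntegral]
    simp only [smul_eq_mul, hfh]
    rfl

lemma moments_analytic {E F : Type*} [NormedAddCommGroup E] [NormedSpace ℂ E]
    [NormedAddCommGroup F] [NormedSpace ℝ F]
    {G H : E → ℂ} (hG : AnalyticAt ℂ G 0) (hH : AnalyticAt ℂ H 0) (L : F →L[ℝ] E) (v : E) :
    ∀ᶠ r in 𝓝[>] (0:ℝ), (∀ w ∈ sphere (0:ℂ) r, G (w • v) ≠ 0) → ∀ k : ℕ,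
      AnalyticAt ℝ (fun x => ∮ w in C(0, r), w ^ k * (H (L x + w • v) / G (L x + w • v))) 0 := by
  obtain ⟨p, R₁, hp⟩ := hG
  obtain ⟨p', R₂, hp'⟩ := hH
  have hp := hp.mono (lt_min hp.r_pos hp'.r_pos) (min_le_left R₁ R₂)
  have hp' := hp'.mono (lt_min hp.r_pos hp'.r_pos |>.trans_le (by simp)) (min_le_right R₁ R₂)
  set R := min R₁ R₂ with hR
  have hRpos : 0 < R := hp.r_pos
  have hev : ∀ᶠ r in 𝓝[>] (0:ℝ), ENNReal.ofReal (r * ‖v‖) < R := by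
    apply nhdsWithin_le_nhds
    have : ContinuousAt (fun r : ℝ => ENNReal.ofReal (r * ‖v‖)) 0 := by
      exact (ENNReal.continuous_ofReal.comp (by fun_prop)).continuousAt
    exact this.eventually (gt_mem_nhds (by simpa using hRpos))
  filter_upwards [hev, self_mem_nhdsWithin] with r hr hr0 hne k
  have hr0 : 0 < r := hr0
  obtain ⟨𝒢, h𝒢⟩ := superposition (K := sphere (0:ℂ) r) hp
  obtain ⟨ℋ, hℋ⟩ := superposition (K := sphere (0:ℂ) r) hp'
  obtain ⟨I, hI⟩ := circle_clm hr0.le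
  let T : F →ₗ[ℝ] C(sphere (0:ℂ) r, E) :=
    { toFun := fun x => ContinuousMap.const _ (L x)
      map_add' := by intro x y; ext s; simp
      map_smul' := by intro c x; ext s; simp }
  let T' : F →L[ℝ] C(sphere (0:ℂ) r, E) := T.mkContinuous ‖L‖ (by
    intro x
    refine (ContinuousMap.norm_le _ (by positivity)).2 (fun s => ?_)
    exact L.le_opNorm x)
  let u₀ : C(sphere (0:ℂ) r, E) := ⟨fun s => (s:ℂ) • v, by fun_prop⟩
  let W : C(sphere (0:ℂ) r, ℂ) := ⟨fun s => (s:ℂ), by fun_prop⟩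
  let u : F → C(sphere (0:ℂ) r, E) := fun x => T' x + u₀
  have hus : ∀ x s, u x s = L x + (s:ℂ) • v := fun x s => rfl
  have hu0 : u 0 = u₀ := by simp [u]
  have hu₀ : u₀ ∈ eball (0 : C(sphere (0:ℂ) r, E)) R := by
    rw [mem_eball_zero_iff]
    refine lt_of_le_of_lt ?_ hr
    rw [← ofReal_norm]
    apply ENNReal.ofReal_le_ofReal
    refine (ContinuousMap.norm_le _ (by positivity)).2 (fun s => ?_)
    have : ‖(s:ℂ)‖ = r := by simpa using s.2
    show ‖(s:ℂ) • v‖ ≤ _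
    rw [norm_smul, this]
  have huan : AnalyticAt ℝ u 0 := (T'.analyticAt 0).add analyticAt_const
  have hunit : IsUnit (𝒢 u₀) := by
    rw [ContinuousMap.isUnit_iff_forall_ne_zero]
    intro s
    rw [(h𝒢 u₀ hu₀).2]
    exact hne s s.2
  have hΦ : AnalyticAt ℂ (fun f => I (W ^ k * (ℋ f * Ring.inverse (𝒢 f)))) u₀ := by
    refine (I.analyticAt _).fun_comp ?_
    refine analyticAt_const.mul ((hℋ u₀ hu₀).1.mul ?_)
    refine AnalyticAt.fun_comp (g := Ring.inverse) ?_ (h𝒢 u₀ hu₀).1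
    exact analyticAt_inverse (𝕜 := ℂ) hunit.unit
  have hF : AnalyticAt ℝ (fun x => I (W ^ k * (ℋ (u x) * Ring.inverse (𝒢 (u x))))) 0 := by
    have h1 := hΦ.restrictScalars (𝕜 := ℝ)
    rw [← hu0] at h1
    exact h1.fun_comp huan
  refine hF.congr ?_
  have hev1 : ∀ᶠ x in 𝓝 (0:F), u x ∈ eball (0 : C(sphere (0:ℂ) r, E)) R := by
    apply huan.continuousAt.eventually
    rw [hu0]
    exact Metric.isOpen_eball.eventually_mem hu₀
  have hev2 : ∀ᶠ x in 𝓝 (0:F), IsUnit (𝒢 (u x)) := by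
    have hc : ContinuousAt (fun x => 𝒢 (u x)) 0 := by
      apply ContinuousAt.comp (g := 𝒢) _ huan.continuousAt
      rw [hu0]
      exact (h𝒢 u₀ hu₀).1.continuousAt
    apply hc.eventually
    show ∀ᶠ y in 𝓝 (𝒢 (u 0)), IsUnit y
    rw [hu0]
    exact Units.isOpen.eventually_mem hunit
  filter_upwards [hev1, hev2] with x hx1 hx2
  apply hI
  intro s
  have h3 := Ring.mul_inverse_cancel _ hx2
  have h4 : 𝒢 (u x) s * Ring.inverse (𝒢 (u x)) s = 1 := by
    rw [← ContinuousMap.mul_apply, h3]; rfl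
  rw [(h𝒢 _ hx1).2, hus] at h4
  simp only [ContinuousMap.mul_apply, ContinuousMap.pow_apply, (hℋ _ hx1).2, hus]
  rw [eq_inv_of_mul_eq_one_right h4]
  rfl

lemma complexify {E : Type*} [NormedAddCommGroup E] [NormedSpace ℝ E] [FiniteDimensional ℝ E]
    {g : E → ℂ} (hg : AnalyticAt ℝ g 0) :
    ∃ (n : ℕ) (L : E →L[ℝ] (Fin n → ℂ)) (Gc : (Fin n → ℂ) → ℂ), AnalyticAt ℂ Gc 0 ∧
      ∀ᶠ x in 𝓝 (0:E), Gc (L x) = g x := by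
  obtain ⟨p, R, hp⟩ := hg
  set n := Module.finrank ℝ E with hn
  let b : Module.Basis (Fin n) ℝ E := Module.finBasis ℝ E
  let L₀ : E →ₗ[ℝ] (Fin n → ℂ) :=
    { toFun := fun x i => ((b.repr x i : ℝ) : ℂ)
      map_add' := by intro x y; ext i; simp
      map_smul' := by intro c x; ext i; simp }
  let L : E →L[ℝ] (Fin n → ℂ) := L₀.toContinuousLinearMap
  have hL : ∀ x i, L x i = ((b.repr x i : ℝ) : ℂ) := fun x i => rfl
  let q : FormalMultilinearSeries ℂ (Fin n → ℂ) ℂ := fun k =>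
    ∑ σ : Fin k → Fin n, p k (fun j => b (σ j)) •
      (ContinuousMultilinearMap.mkPiAlgebra ℂ (Fin k) ℂ).compContinuousLinearMap
        (fun j => ContinuousLinearMap.proj (R := ℂ) (φ := fun _ : Fin n => ℂ) (σ j))
  obtain ⟨B, hB0, hB⟩ : ∃ B : NNReal, 0 < B ∧ ∀ i, ‖b i‖ ≤ B := by
    refine ⟨1 + ∑ i, ‖b i‖₊, by positivity, fun i => ?_⟩
    have : ‖b i‖ ≤ ∑ i, ‖b i‖ :=
      Finset.single_le_sum (f := fun i => ‖b i‖) (fun _ _ => norm_nonneg _) (Finset.mem_univ i)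
    push_cast
    linarith
  have hqn : ∀ k, ‖q k‖ ≤ ‖p k‖ * (n * B) ^ k := by
    intro k
    calc ‖q k‖ ≤ ∑ σ : Fin k → Fin n, ‖p k‖ * B ^ k := by
          refine norm_sum_le_of_le _ (fun σ _ => ?_)
          rw [norm_smul]
          have h1 : ‖p k (fun j => b (σ j))‖ ≤ ‖p k‖ * B ^ k := by
            refine ((p k).le_opNorm _).trans ?_
            gcongr
            calc ∏ j, ‖b (σ j)‖ ≤ ∏ j : Fin k, (B:ℝ) :=
                  Finset.prod_le_prod (fun _ _ => norm_nonneg _) (fun j _ => hB _)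
              _ = B ^ k := by simp
          have h2 : ‖(ContinuousMultilinearMap.mkPiAlgebra ℂ (Fin k) ℂ).compContinuousLinearMap
                (fun j => ContinuousLinearMap.proj (R := ℂ) (φ := fun _ : Fin n => ℂ) (σ j))‖ ≤ 1 := by
            refine ContinuousMultilinearMap.opNorm_le_bound zero_le_one (fun m => ?_)
            simp only [ContinuousMultilinearMap.compContinuousLinearMap_apply,
              ContinuousMultilinearMap.mkPiAlgebra_apply, ContinuousLinearMap.proj_apply, norm_prod,
              one_mul]
            exact Finset.prod_le_prod (fun _ _ => norm_nonneg _) (fun j _ => norm_le_pi_norm _ _)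
          calc _ ≤ ‖p k‖ * B ^ k * 1 := by gcongr
            _ = _ := mul_one _
      _ = ‖p k‖ * (n * B) ^ k := by
          simp [mul_pow]; ring
  have hqp : ∀ k x, q k (fun _ => L x) = p k (fun _ => x) := by
    intro k x
    have h1 : p k (fun _ => x) = ∑ σ : Fin k → Fin n, p k (fun j => b.repr x (σ j) • b (σ j)) := by
      conv_lhs => rw [← b.sum_repr x]
      exact (p k).toMultilinearMap.map_sum (fun _ i => b.repr x i • b i)
    rw [h1]
    simp only [q, sum_apply, smul_apply,
      ContinuousMultilinearMap.compContinuousLinearMap_apply,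
      ContinuousMultilinearMap.mkPiAlgebra_apply, ContinuousLinearMap.proj_apply, hL]
    refine Finset.sum_congr rfl (fun σ _ => ?_)
    rw [(p k).map_smul_univ (fun j => b.repr x (σ j)) (fun j => b (σ j))]
    rw [Complex.real_smul, smul_eq_mul, mul_comm]
    push_cast
    rfl
  have hrad : 0 < q.radius := by
    have hc : ContinuousAt (fun r : NNReal => (((n:NNReal) * B * r : NNReal) : ENNReal)) 0 :=
      (ENNReal.continuous_coe.comp (by fun_prop)).continuousAt
    have hev : ∀ᶠ r : NNReal in 𝓝 0, (((n:NNReal) * B * r : NNReal) : ENNReal) < p.radius :=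
      hc.eventually (gt_mem_nhds (by simpa using hp.radius_pos))
    obtain ⟨r, hr, hr0⟩ := ((hev.filter_mono nhdsWithin_le_nhds).and
      (self_mem_nhdsWithin : Ioi (0:NNReal) ∈ 𝓝[>] (0:NNReal))).exists
    obtain ⟨C, hC, h⟩ := p.norm_mul_pow_le_of_lt_radius hr
    refine lt_of_lt_of_le (ENNReal.coe_pos.2 hr0) (q.le_radius_of_bound C (fun k => ?_))
    refine le_trans ?_ (h k)
    calc ‖q k‖ * (r:ℝ) ^ k ≤ ‖p k‖ * (n * B) ^ k * r ^ k := by gcongr; exact hqn k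
      _ = _ := by push_cast; ring
  have hq := q.hasFPowerSeriesOnBall hrad
  refine ⟨n, L, q.sum, hq.analyticAt, ?_⟩
  have hev1 : ∀ᶠ x in 𝓝 (0:E), L x ∈ eball (0 : Fin n → ℂ) q.radius := by
    apply L.continuous.continuousAt.eventually
    rw [map_zero]
    exact Metric.isOpen_eball.eventually_mem (Metric.mem_eball_self hrad)
  have hev2 : ∀ᶠ x in 𝓝 (0:E), x ∈ eball (0 : E) R :=
    Metric.isOpen_eball.eventually_mem (Metric.mem_eball_self hp.r_pos)
  filter_upwards [hev1, hev2] with x hx1 hx2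
  have h1 := q.hasSum hx1
  simp only [hqp] at h1
  have h2 := hp.hasSum hx2
  rw [zero_add] at h2
  exact h1.unique h2

lemma key_lemma {E : Type*} [NormedAddCommGroup E] [NormedSpace ℝ E] [FiniteDimensional ℝ E]
    {g : E × ℝ → ℂ} (hg : AnalyticAt ℝ g 0) (hg0 : ¬ ∀ᶠ t in 𝓝 (0:ℝ), g (0, t) = 0) :
    ∃ (Δ : E → ℂ) (C r₀ : ℝ), 0 < r₀ ∧ AnalyticAt ℝ Δ 0 ∧ (¬ ∀ᶠ x in 𝓝 (0:E), Δ x = 0) ∧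
      ∀ᶠ x in 𝓝 (0:E), ∀ α β : ℝ, |α| < r₀ → |β| < r₀ → α ≠ β → g (x, α) = 0 →
      g (x, β) = 0 → ‖Δ x‖ ≤ C * |α - β| := by
  obtain ⟨n, L, G, hG, hGL⟩ := complexify hg
  set v : Fin n → ℂ := L (0, 1) with hv
  let L₁ : E →L[ℝ] (Fin n → ℂ) := L.comp (ContinuousLinearMap.inl ℝ E ℝ)
  have hL₁ : ∀ (x : E) (t : ℝ), L (x, t) = L₁ x + (t:ℂ) • v := by
    intro x t
    have : (x, t) = (x, (0:ℝ)) + t • ((0:E), (1:ℝ)) := by simp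
    rw [this, map_add, map_smul]
    simp [L₁, v]
  set H : (Fin n → ℂ) → ℂ := fun z => fderiv ℂ G z v with hH
  have hHan : AnalyticAt ℂ H 0 := by
    have h1 := hG.fderiv
    exact ((ContinuousLinearMap.apply ℂ ℂ v).analyticAt _).fun_comp h1
  have hφ : ∀ᶠ w in 𝓝[≠] (0:ℂ), G (w • v) ≠ 0 := by
    have h1 : AnalyticAt ℂ (fun w : ℂ => G (w • v)) 0 := by
      refine AnalyticAt.fun_comp (g := G) (by simpa using hG) ?_
      exact analyticAt_id.smul analyticAt_const
    refine h1.eventually_eq_zero_or_eventually_ne_zero.resolve_left (fun h2 => hg0 ?_)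
    have h3 : ∀ᶠ t : ℝ in 𝓝 0, G ((t:ℂ) • v) = 0 := by
      have hc : ContinuousAt (fun t : ℝ => (t:ℂ)) 0 := Complex.continuous_ofReal.continuousAt
      exact hc.eventually (by simpa using h2)
    have h4 : ∀ᶠ t : ℝ in 𝓝 0, G (L ((0:E), t)) = g (0, t) := by
      have hc : ContinuousAt (fun t : ℝ => ((0:E), t)) 0 := by fun_prop
      exact hc.eventually hGL
    filter_upwards [h3, h4] with t h3 h4
    rw [← h4, hL₁, map_zero, zero_add, h3]
  obtain ⟨r₁, hr₁, hr₁'⟩ : ∃ r > 0, ∀ w : ℂ, ‖w‖ < r → w ≠ 0 → G (w • v) ≠ 0 := by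
    rw [eventually_nhdsWithin_iff, Metric.eventually_nhds_iff] at hφ
    obtain ⟨r, hr, h⟩ := hφ
    exact ⟨r, hr, fun t ht hne => h (by simpa using ht) hne⟩
  obtain ⟨ρ, hρ, hρan⟩ := Metric.eventually_nhds_iff_ball.1 hG.eventually_analyticAt
  obtain ⟨ρ₂, hρ₂, hρ₂g⟩ := Metric.eventually_nhds_iff_ball.1 hGL
  obtain ⟨r, hr, hrr₁, hrh, hrv, hrρ, hmom⟩ : ∃ r : ℝ, 0 < r ∧ r < r₁ ∧ r < 1 / 2 ∧ r * ‖v‖ < ρ ∧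
      r < ρ₂ ∧ ((∀ w ∈ sphere (0:ℂ) r, G (w • v) ≠ 0) → ∀ k : ℕ,
      AnalyticAt ℝ (fun x => ∮ w in C(0, r), w ^ k * (H (L₁ x + w • v) / G (L₁ x + w • v))) 0) := by
    have e1 : ∀ᶠ r in 𝓝 (0:ℝ), r < r₁ ∧ r < 1 / 2 ∧ r * ‖v‖ < ρ ∧ r < ρ₂ := by
      refine (gt_mem_nhds hr₁).and ((gt_mem_nhds (by norm_num)).and (Eventually.and ?_ (gt_mem_nhds hρ₂)))
      have hc : ContinuousAt (fun r : ℝ => r * ‖v‖) 0 := by fun_prop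
      exact hc.eventually (gt_mem_nhds (by simpa using hρ))
    obtain ⟨r, ⟨h1, h2, h3, h4⟩, h5, h6⟩ := ((e1.filter_mono nhdsWithin_le_nhds).and
      ((moments_analytic hG hHan L₁ v).and (self_mem_nhdsWithin : Ioi (0:ℝ) ∈ 𝓝[>] (0:ℝ)))).exists
    exact ⟨r, h6, h1, h2, h3, h4, h5⟩
  have hne0 : ∀ w ∈ sphere (0:ℂ) r, G (w • v) ≠ 0 := by
    intro w hw
    have hw' : ‖w‖ = r := by simpa using hw
    exact hr₁' w (by linarith) (by rintro rfl; simp at hw'; linarith)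
  have hmom := hmom hne0
  -- good points
  have hA : ∀ᶠ x in 𝓝 (0:E), ∀ w ∈ closedBall (0:ℂ) r, AnalyticAt ℂ G (L₁ x + w • v) := by
    have hc : ContinuousAt (fun x => ‖L₁ x‖ + r * ‖v‖) 0 := by fun_prop
    have : ∀ᶠ x in 𝓝 (0:E), ‖L₁ x‖ + r * ‖v‖ < ρ := hc.eventually (gt_mem_nhds (by simpa using hrv))
    filter_upwards [this] with x hx w hw
    apply hρan
    rw [mem_ball_zero_iff]
    have hw' : ‖w‖ ≤ r := by simpa using hw
    calc ‖L₁ x + w • v‖ ≤ ‖L₁ x‖ + ‖w • v‖ := norm_add_le _ _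
      _ ≤ ‖L₁ x‖ + r * ‖v‖ := by rw [norm_smul]; gcongr
      _ < ρ := hx
  have hA0 := hA.self_of_nhds
  have hB : ∀ᶠ x in 𝓝 (0:E), ∀ w ∈ sphere (0:ℂ) r, G (L₁ x + w • v) ≠ 0 := by
    apply IsCompact.eventually_forall_of_forall_eventually (isCompact_sphere _ _)
    intro w hw
    have hc : ContinuousAt (fun z : E × ℂ => G (L₁ z.1 + z.2 • v)) (0, w) :=
      ContinuousAt.comp (g := G) (hA0 w (sphere_subset_closedBall hw)).continuousAt (by fun_prop)
    exact hc.eventually_ne (by simpa using hne0 w hw)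
  set P : ℕ → E → ℂ := fun k x => (2 * Real.pi * Complex.I)⁻¹ *
    ∮ w in C(0, r), w ^ k * (H (L₁ x + w • v) / G (L₁ x + w • v)) with hP
  have hPan : ∀ k, AnalyticAt ℝ (P k) 0 := fun k => analyticAt_const.mul (hmom k)
  have hC : ∀ᶠ x in 𝓝 (0:E), ‖P 0 x‖ < ‖P 0 0‖ + 1 :=
    (hPan 0).continuousAt.norm.eventually (gt_mem_nhds (by linarith))
  set D := ‖P 0 0‖ + 1 with hD
  have hD0 : 0 ≤ D := by positivity
  have hgood : ∀ᶠ x in 𝓝 (0:E), ∃ (Z : Finset ℂ) (m : ℂ → ℕ), (∀ a ∈ Z, a ∈ ball (0:ℂ) r) ∧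
      (∀ a ∈ ball (0:ℂ) r, G (L₁ x + a • v) = 0 → a ∈ Z) ∧ (∀ a ∈ Z, 0 < m a) ∧
      (∀ k : ℕ, P k x = ∑ a ∈ Z, (m a : ℂ) * a ^ k) ∧ (∀ a ∈ Z, (m a : ℝ) ≤ D) ∧
      (Z.card : ℝ) ≤ D := by
    filter_upwards [hA, hB, hC] with x hxA hxB hxC
    have hderiv : ∀ w ∈ closedBall (0:ℂ) r,
        HasDerivAt (fun w : ℂ => G (L₁ x + w • v)) (H (L₁ x + w • v)) w := by
      intro w hw
      have h1 := (hxA w hw).differentiableAt.hasFDerivAt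
      have h2 : HasDerivAt (fun w : ℂ => L₁ x + w • v) v w := by
        simpa using ((hasDerivAt_id w).smul_const v).const_add (L₁ x)
      exact h1.comp_hasDerivAt w h2
    have han : AnalyticOnNhd ℂ (fun w : ℂ => G (L₁ x + w • v)) (closedBall 0 r) := by
      intro w hw
      refine AnalyticAt.fun_comp (g := G) (hxA w hw) ?_
      exact analyticAt_const.add (analyticAt_id.smul analyticAt_const)
    obtain ⟨Z, m, h1, h2, h3, h4⟩ := arg_principle hr han hxB
    have hPk : ∀ k : ℕ, P k x = ∑ a ∈ Z, (m a : ℂ) * a ^ k := by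
      intro k
      have h5 : (∮ w in C(0, r), w ^ k * (H (L₁ x + w • v) / G (L₁ x + w • v))) =
          ∮ w in C(0, r), w ^ k * (deriv (fun w : ℂ => G (L₁ x + w • v)) w / G (L₁ x + w • v)) := by
        apply circleIntegral.integral_congr hr.le
        intro w hw
        simp only [(hderiv w (sphere_subset_closedBall hw)).deriv]
      simp only [hP]
      rw [h5, h4 k, ← mul_assoc, inv_mul_cancel₀, one_mul]
      simp [Real.pi_ne_zero]
    have hsum : ((∑ a ∈ Z, m a : ℕ) : ℝ) ≤ D := by
      have h6 : P 0 x = ((∑ a ∈ Z, m a : ℕ) : ℂ) := by rw [hPk 0]; simp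
      rw [h6, Complex.norm_natCast] at hxC
      exact hxC.le
    refine ⟨Z, m, h1, h2, h3, hPk, ?_, ?_⟩
    · intro a ha
      refine le_trans ?_ hsum
      exact_mod_cast Finset.single_le_sum (f := m) (fun _ _ => Nat.zero_le _) ha
    · refine le_trans ?_ hsum
      have : Z.card ≤ ∑ a ∈ Z, m a := by
        rw [Finset.card_eq_sum_ones]
        exact Finset.sum_le_sum (fun a ha => h3 a ha)
      exact_mod_cast this
  set Hk : ℕ → E → ℂ := fun k x => (Matrix.of fun i j : Fin k => P (i + j) x).det with hHk
  have hHkan : ∀ k, AnalyticAt ℝ (Hk k) 0 := by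
    intro k
    simp only [hHk, Matrix.det_apply, Matrix.of_apply]
    apply Finset.analyticAt_fun_sum
    intro σ _
    have h1 : AnalyticAt ℝ (fun x => ∏ i, P ((σ i : ℕ) + (i : ℕ)) x) 0 :=
      Finset.analyticAt_fun_prod _ (fun i _ => hPan _)
    simp only [Units.smul_def, zsmul_eq_mul]
    exact analyticAt_const.mul h1
  classical
  set N := ⌊D⌋₊ with hN
  set good : ℕ → Prop := fun k => ¬ ∀ᶠ x in 𝓝 (0:E), Hk k x = 0 with hgooddef
  have hgood0 : good 0 := by
    intro h
    have := h.self_of_nhds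
    simp [hHk] at this
  set K := Nat.findGreatest good N with hK
  have hKgood : good K := Nat.findGreatest_spec (Nat.zero_le N) hgood0
  have hKev : ∀ᶠ x in 𝓝 (0:E), ∀ k ∈ Finset.Ioc K N, Hk k x = 0 := by
    rw [Filter.eventually_all_finset]
    intro k hk
    rw [Finset.mem_Ioc] at hk
    by_contra hcon
    exact Nat.findGreatest_is_greatest hk.1 hk.2 hcon
  refine ⟨Hk K, D ^ K, r, hr, hHkan K, hKgood, ?_⟩
  filter_upwards [hgood, hKev, Metric.ball_mem_nhds (0:E) hρ₂] with x hx hxK hxρ α β hα hβ hαβ hgα hgβ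
  obtain ⟨Z, m, h1, h2, h3, h4, h5, h6⟩ := hx
  have hmem : ∀ t : ℝ, |t| < r → g (x, t) = 0 → (t:ℂ) ∈ Z := by
    intro t ht hgt
    refine h2 t (by simpa using ht) ?_
    rw [← hL₁, hρ₂g _ ?_, hgt]
    rw [mem_ball_zero_iff, Prod.norm_def]
    exact max_lt (by simpa using hxρ) (by simp; linarith)
  by_cases hz : Hk K x = 0
  · rw [hz, norm_zero]; positivity
  have hcard : Z.card = K := by
    apply le_antisymm
    · by_contra hlt
      push Not at hlt
      exact hankel_ne (P := fun k => P k x) h4 h3 (hxK Z.card (Finset.mem_Ioc.2 ⟨hlt, Nat.le_floor h6⟩))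
    · by_contra hlt
      push Not at hlt
      exact hz (hankel_zero (P := fun k => P k x) h4 hlt)
  have := hankel_le (P := fun k => P k x) h4 h5 (fun a ha => by
    have := h1 a ha
    rw [mem_ball_zero_iff] at this
    linarith) (hmem α hα hgα) (hmem β hβ hgβ) (by exact_mod_cast hαβ)
  rw [hcard] at this
  refine this.trans (le_of_eq ?_)
  rw [← Complex.ofReal_sub, Complex.norm_real, Real.norm_eq_abs]

lemma adh_transfer {E F : Type} [NormedAddCommGroup E] [NormedSpace ℝ E] [NormedAddCommGroup F]
    [NormedSpace ℝ F] (e : E ≃L[ℝ] F) (p : F) {g : F → ℂ} {s : Set F}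
    (h : ∀ᶠ x in 𝓝 (0:E), g (e x + p) ≠ 0 → (0:E) ∈ closure (connectedComponentIn
      ((fun x => e x + p) ⁻¹' s ∩ {z | g (e z + p) ≠ 0}) x)) (hs : s ∈ 𝓝 p) :
    ∀ᶠ y in 𝓝 p, g y ≠ 0 → p ∈ closure (connectedComponentIn (s ∩ {z | g z ≠ 0}) y) := by
  have hT : Continuous (fun x : E => e x + p) := by fun_prop
  have hc : ContinuousAt (fun y : F => e.symm (y - p)) p := by fun_prop
  have h1 : ∀ᶠ x in 𝓝 ((fun y : F => e.symm (y - p)) p), g (e x + p) ≠ 0 →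
      (0:E) ∈ closure (connectedComponentIn
      ((fun x => e x + p) ⁻¹' s ∩ {z | g (e z + p) ≠ 0}) x) := by simpa using h
  filter_upwards [hc.eventually h1, hs] with y hy hys hgy
  have hey : e (e.symm (y - p)) + p = y := by simp
  rw [hey] at hy
  have h2 := hy hgy
  have h3 : (fun x => e x + p) '' (connectedComponentIn
      ((fun x => e x + p) ⁻¹' s ∩ {z | g (e z + p) ≠ 0}) (e.symm (y - p))) ⊆
      connectedComponentIn (s ∩ {z | g z ≠ 0}) y := by
    apply (isPreconnected_connectedComponentIn.image _ hT.continuousOn).subset_connectedComponentIn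
    · refine ⟨e.symm (y - p), mem_connectedComponentIn ?_, hey⟩
      constructor
      · show e (e.symm (y - p)) + p ∈ s
        rw [hey]; exact hys
      · show g (e (e.symm (y - p)) + p) ≠ 0
        rw [hey]; exact hgy
    · rintro _ ⟨z, hz, rfl⟩
      have hz' := connectedComponentIn_subset _ _ hz
      exact ⟨hz'.1, hz'.2⟩
  have h4 : (fun x => e x + p) 0 ∈ closure ((fun x => e x + p) '' (connectedComponentIn
      ((fun x => e x + p) ⁻¹' s ∩ {z | g (e z + p) ≠ 0}) (e.symm (y - p)))) :=
    image_closure_subset_closure_image hT ⟨0, h2, rfl⟩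
  have h5 := closure_mono h3 h4
  simpa using h5

lemma adh_of_ne {E : Type} [NormedAddCommGroup E] [NormedSpace ℝ E] {g : E → ℂ}
    (hg : ContinuousAt g 0) (h0 : g 0 ≠ 0) {s : Set E} (hs : s ∈ 𝓝 (0:E)) :
    ∀ᶠ x in 𝓝 (0:E), g x ≠ 0 → (0:E) ∈ closure (connectedComponentIn (s ∩ {z | g z ≠ 0}) x) := by
  obtain ⟨r, hr, h⟩ := Metric.eventually_nhds_iff_ball.1
    ((hg.eventually_ne h0).and (show ∀ᶠ x in 𝓝 (0:E), x ∈ s from hs))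
  filter_upwards [ball_mem_nhds (0:E) hr] with x hx _
  apply subset_closure
  have hsub : ball (0:E) r ⊆ s ∩ {z | g z ≠ 0} := fun y hy => ⟨(h y hy).2, (h y hy).1⟩
  have h3 : ball (0:E) r ⊆ connectedComponentIn (s ∩ {z | g z ≠ 0}) x :=
    (convex_ball (0:E) r).isPreconnected.subset_connectedComponentIn hx hsub
  exact h3 (mem_ball_self hr)

lemma adhProp_fin (N : ℕ) : AdhProp (Fin N → ℝ) := by
  induction N with
  | zero =>
    intro g hg s hs
    by_cases h0 : g 0 = 0
    · refine Eventually.of_forall (fun x hx => absurd ?_ hx)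
      rw [Subsingleton.elim x 0, h0]
    · exact adh_of_ne hg.continuousAt h0 hs
  | succ N ih =>
    intro g hg s hs
    by_cases h0 : g 0 = 0
    swap
    · exact adh_of_ne hg.continuousAt h0 hs
    by_cases hev : ∀ᶠ x in 𝓝 (0 : Fin (N+1) → ℝ), g x = 0
    · filter_upwards [hev] with x hx hne using absurd hx hne
    obtain ⟨R, hR, hRan⟩ := Metric.eventually_nhds_iff_ball.1 hg.eventually_analyticAt
    obtain ⟨v, hgv, hvR⟩ := ((Filter.not_eventually.1 hev).and_eventually
      (isOpen_ball.eventually_mem (mem_ball_self hR))).exists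
    have hv0 : v ≠ 0 := by rintro rfl; exact hgv h0
    have hline : ¬ ∀ᶠ t in 𝓝 (0:ℝ), g (t • v) = 0 := by
      intro hcon
      have han : AnalyticOnNhd ℝ (fun t : ℝ => g (t • v)) (Icc 0 1) := by
        intro t ht
        refine AnalyticAt.fun_comp (g := g) (hRan _ ?_) (analyticAt_id.smul analyticAt_const)
        rw [mem_ball_zero_iff] at hvR ⊢
        rw [norm_smul, Real.norm_eq_abs, abs_of_nonneg ht.1]
        exact (mul_le_of_le_one_left (norm_nonneg _) ht.2).trans_lt hvR
      have := han.eqOn_zero_of_preconnected_of_eventuallyEq_zero isPreconnected_Icc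
        (left_mem_Icc.2 zero_le_one) hcon (right_mem_Icc.2 zero_le_one)
      simp at this
      exact hgv this
    have hfr : Module.finrank ℝ ((Fin N → ℝ) × ℝ) = Module.finrank ℝ (Fin (N+1) → ℝ) := by simp
    let e₀ : ((Fin N → ℝ) × ℝ) ≃L[ℝ] (Fin (N+1) → ℝ) := ContinuousLinearEquiv.ofFinrankEq hfr
    obtain ⟨A, hAv⟩ := SeparatingDual.exists_continuousLinearEquiv_apply_eq (R := ℝ)
      (x := e₀ (0, 1)) (y := v) (by simp [e₀.map_eq_zero_iff]) hv0
    let e := e₀.trans A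
    have he : ∀ t : ℝ, e (0, t) = t • v := by
      intro t
      have : ((0 : Fin N → ℝ), t) = t • ((0 : Fin N → ℝ), (1:ℝ)) := by simp
      rw [this, map_smul]
      show t • A (e₀ (0, 1)) = t • v
      rw [hAv]
    have hge : AnalyticAt ℝ (fun z => g (e z)) 0 :=
      AnalyticAt.fun_comp (g := g) (by simpa using hg) (e.analyticAt 0)
    have hge0 : ¬ ∀ᶠ t in 𝓝 (0:ℝ), g (e (0, t)) = 0 := by simpa only [he] using hline
    obtain ⟨Δ, C, r₀, hr₀, hΔ, hΔ0, hsep⟩ := key_lemma hge hge0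
    have hs' : e ⁻¹' s ∈ 𝓝 (0 : (Fin N → ℝ) × ℝ) :=
      e.continuous.continuousAt.preimage_mem_nhds (by simpa using hs)
    have hfin := adh_step ih hge hge0 hΔ hΔ0 hr₀ hsep hs'
    exact adh_transfer e 0 (by simpa only [add_zero] using hfin) hs

lemma adherent_components {E : Type} [NormedAddCommGroup E] [NormedSpace ℝ E] [FiniteDimensional ℝ E]
    {g : E → ℂ} {p : E} (hg : AnalyticAt ℝ g p) {s : Set E} (hs : s ∈ 𝓝 p) :
    ∀ᶠ x in 𝓝 p, g x ≠ 0 → p ∈ closure (connectedComponentIn (s ∩ {z | g z ≠ 0}) x) := by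
  have hfr : Module.finrank ℝ (Fin (Module.finrank ℝ E) → ℝ) = Module.finrank ℝ E := by simp
  let e : (Fin (Module.finrank ℝ E) → ℝ) ≃L[ℝ] E := ContinuousLinearEquiv.ofFinrankEq hfr
  have hT : AnalyticAt ℝ (fun x => e x + p) 0 := (e.analyticAt 0).add analyticAt_const
  have hge : AnalyticAt ℝ (fun z => g (e z + p)) 0 :=
    AnalyticAt.fun_comp (g := g) (by simpa using hg) hT
  exact adh_transfer e p (adhProp_fin _ _ hge _
    (hT.continuousAt.preimage_mem_nhds (by simpa using hs))) hs


theorem hartogs_type_extension_from_one_side {n : ℕ} (hn : 2 ≤ n)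
    (U H : Set (EuclideanSpace ℂ (Fin n)))
    (hH : IsRealAnalyticHypersurface U H)
    (p : EuclideanSpace ℂ (Fin n)) (hp : p ∈ H)
    (C₁ C₂ V V₂ : Set (EuclideanSpace ℂ (Fin n)))
    (hC₁ : IsSupportCurve U H p C₁) (hC₂ : IsSupportCurve U H p C₂)
    (hV : IsComponentOfComplement U H V) (hV₂ : IsComponentOfComplement U H V₂)
    (hne : V ≠ V₂) (hC₁V : C₁ \ {p} ⊆ V) (hC₂V : C₂ \ {p} ⊆ V₂) :
    ∃ Ω : Set (EuclideanSpace ℂ (Fin n)), IsOpen Ω ∧ p ∈ Ω ∧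
      ∀ f : EuclideanSpace ℂ (Fin n) → ℂ, DifferentiableOn ℂ f V →
        (∃ δ > 0, ∃ g : EuclideanSpace ℂ (Fin n) → ℂ,
          DifferentiableOn ℂ g (ball p δ) ∧ ∀ z ∈ ball p δ ∩ V, g z = f z) →
        ∃ F : EuclideanSpace ℂ (Fin n) → ℂ, DifferentiableOn ℂ F Ω ∧
          ∀ z ∈ Ω ∩ V, F z = f z := by
  obtain ⟨hU, -, ρ, hρ, hHeq, -⟩ := hH
  obtain ⟨x0, hx0, hVeq⟩ := hV
  obtain ⟨φ, hφd, hφU, ⟨a, ha, b, hb, hab⟩, hφ0, hCeq, -⟩ := hC₁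
  have hpU : p ∈ U := by rw [hHeq] at hp; exact hp.1
  have hUH : U \ H = U ∩ {z | ρ z ≠ 0} := by
    rw [hHeq]; ext z
    simp only [Set.mem_sdiff, mem_ofPred_eq, mem_inter_iff]
    tauto
  have hopen : ∀ s ⊆ U, IsOpen s → IsOpen (s ∩ {z | ρ z ≠ 0}) := by
    intro s hs hso
    exact (hρ.continuousOn.mono hs).isOpen_inter_preimage hso isOpen_ne
  have hVo : IsOpen V := by
    rw [hVeq]
    apply IsOpen.connectedComponentIn
    rw [hUH]; exact hopen U subset_rfl hU
  -- choose the radius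
  have hφan : AnalyticOnNhd ℂ φ (ball 0 1) := hφd.analyticOnNhd isOpen_ball
  have h0mem : (0:ℂ) ∈ ball (0:ℂ) 1 := by simp
  obtain ⟨r, hr0, hr1, hrne⟩ : ∃ r : ℝ, 0 < r ∧ r < 1 ∧ ∀ ξ ∈ closedBall (0:ℂ) r, ξ ≠ 0 → φ ξ ≠ p := by
    have hsub : AnalyticAt ℂ (fun ξ => φ ξ - p) 0 := (hφan 0 h0mem).sub analyticAt_const
    rcases hsub.eventually_eq_zero_or_eventually_ne_zero with h | h
    · exfalso
      have h2 := (hφan).eqOn_of_preconnected_of_eventuallyEq (g := fun _ => p)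
        (fun _ _ => analyticAt_const) (convex_ball _ _).isPreconnected h0mem
        (by filter_upwards [h] with z hz using sub_eq_zero.1 hz)
      exact hab ((h2 ha).trans (h2 hb).symm)
    · rw [eventually_nhdsWithin_iff, Metric.eventually_nhds_iff] at h
      obtain ⟨ε, hε, h⟩ := h
      refine ⟨min (ε / 2) (1 / 2), by positivity, by
        have := min_le_right (ε / 2) (1 / 2 : ℝ); linarith, ?_⟩
      intro ξ hξ hne
      have hξ' : dist ξ 0 ≤ min (ε / 2) (1 / 2) := hξ
      have := min_le_left (ε / 2) (1 / 2 : ℝ)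
      exact sub_ne_zero.1 (h (by linarith) hne)
  have hcb : closedBall (0:ℂ) r ⊆ ball 0 1 := closedBall_subset_ball hr1
  have hφV : ∀ ξ ∈ closedBall (0:ℂ) r, ξ ≠ 0 → φ ξ ∈ V := by
    intro ξ hξ hne
    apply hC₁V
    refine ⟨?_, hrne ξ hξ hne⟩
    rw [hCeq]
    exact ⟨ξ, hcb hξ, rfl⟩
  have hsph : ∀ ξ ∈ sphere (0:ℂ) r, φ ξ ∈ V := by
    intro ξ hξ
    refine hφV ξ (sphere_subset_closedBall hξ) ?_
    rintro rfl
    simp at hξ; linarith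
  obtain ⟨ε₁, hε₁, hthick⟩ : ∃ ε, 0 < ε ∧ cthickening ε (φ '' sphere 0 r) ⊆ V :=
    IsCompact.exists_cthickening_subset_open ((isCompact_sphere _ _).image_of_continuousOn
      (hφd.continuousOn.mono (sphere_subset_closedBall.trans hcb))) hVo
      (by rintro _ ⟨ξ, hξ, rfl⟩; exact hsph ξ hξ)
  obtain ⟨ε₂, hε₂, hballU⟩ := Metric.isOpen_iff.1 hU p hpU
  set ε := min ε₁ ε₂ with hε
  have hεpos : 0 < ε := lt_min hε₁ hε₂
  have hsU : ball p ε ⊆ U := (ball_subset_ball (min_le_right _ _)).trans hballU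
  have hAn : AnalyticAt ℝ (fun z => (ρ z : ℂ)) p :=
    (Complex.ofRealCLM.analyticAt _).comp (hρ p hpU)
  have hT := adherent_components hAn (ball_mem_nhds p hεpos)
  obtain ⟨ε₃, hε₃, hT⟩ := Metric.eventually_nhds_iff_ball.1 hT
  have hset : {z : EuclideanSpace ℂ (Fin n) | (ρ z : ℂ) ≠ 0} = {z | ρ z ≠ 0} := by
    ext z; simp
  rw [hset] at hT
  refine ⟨ball p (min ε ε₃), isOpen_ball, mem_ball_self (lt_min hεpos hε₃), ?_⟩
  rintro f hf ⟨δ, hδ, g, hg, hgf⟩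
  have hγ : Continuous (fun θ => φ (circleMap 0 r θ)) :=
    hφd.continuousOn.comp_continuous (continuous_circleMap 0 r)
      (fun θ => hcb (circleMap_mem_closedBall 0 hr0.le θ))
  have hin : ∀ ξ ∈ sphere (0:ℂ) r, ∀ t, ‖t‖ ≤ ε → φ ξ + t ∈ V := by
    intro ξ hξ t ht
    apply hthick
    apply mem_cthickening_of_dist_le _ (φ ξ) _ _ (mem_image_of_mem φ hξ)
    simpa using ht.trans (min_le_left _ _)
  have hPI := paramInt_differentiableOn hVo hf hγ
    (c := fun θ => deriv (circleMap 0 r) θ * (circleMap 0 r θ)⁻¹) (ε := ε)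
    (by
      apply Continuous.mul
      · have : deriv (circleMap 0 r) = fun θ => circleMap 0 r θ * Complex.I := by
          ext θ; simp [deriv_circleMap]
        rw [this]; exact (continuous_circleMap 0 r).mul continuous_const
      · exact (continuous_circleMap 0 r).inv₀ (fun θ => circleMap_ne_center hr0.ne'))
    (fun θ t ht => hin _ (circleMap_mem_sphere 0 hr0.le θ) t ht)
  set F : EuclideanSpace ℂ (Fin n) → ℂ := fun z =>
    (2 * Real.pi * Complex.I : ℂ)⁻¹ • ∮ ξ in C(0, r), (ξ - 0)⁻¹ • f (φ ξ + (z - p)) with hF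
  have hFd : DifferentiableOn ℂ F (ball p ε) := by
    have h1 : DifferentiableOn ℂ (fun z : EuclideanSpace ℂ (Fin n) => z - p) (ball p ε) := by fun_prop
    have h2 := (hPI.comp h1 (fun z hz => by simpa [dist_eq_norm] using hz)).const_smul
      (2 * Real.pi * Complex.I : ℂ)⁻¹
    refine h2.congr ?_
    intro z hz
    simp only [hF, circleIntegral, Function.comp, smul_eq_mul, sub_zero, mul_assoc, Pi.smul_apply]
  refine ⟨F, hFd.mono (ball_subset_ball (min_le_left _ _)), ?_⟩
  -- agreement near `p`
  classical
  set f' : EuclideanSpace ℂ (Fin n) → ℂ := fun z => if z ∈ V then f z else g z with hf'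
  have hf'V : ∀ z ∈ V, f' z = f z := fun z hz => by simp [hf', hz]
  have hf'g : ∀ z ∈ ball p δ, f' z = g z := by
    intro z hz
    by_cases hzV : z ∈ V
    · rw [hf'V z hzV, hgf z ⟨hz, hzV⟩]
    · simp [hf', hzV]
  have hf'd : ∀ z ∈ V ∪ ball p δ, DifferentiableAt ℂ f' z := by
    rintro z (hz | hz)
    · have := (hf z hz).differentiableAt (hVo.mem_nhds hz)
      refine this.congr_of_eventuallyEq ?_
      filter_upwards [hVo.mem_nhds hz] with y hy using hf'V y hy
    · have := (hg z hz).differentiableAt (isOpen_ball.mem_nhds hz)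
      refine this.congr_of_eventuallyEq ?_
      filter_upwards [isOpen_ball.mem_nhds hz] with y hy using hf'g y hy
  obtain ⟨δ', hδ', hthick'⟩ : ∃ ε, 0 < ε ∧ cthickening ε (φ '' closedBall 0 r) ⊆ V ∪ ball p δ :=
    IsCompact.exists_cthickening_subset_open ((isCompact_closedBall _ _).image_of_continuousOn
      (hφd.continuousOn.mono hcb)) (hVo.union isOpen_ball)
      (by
        rintro _ ⟨ξ, hξ, rfl⟩
        by_cases h : ξ = 0
        · right; rw [h, hφ0]; exact mem_ball_self hδ
        · left; exact hφV ξ hξ h)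
  have hFf : ∀ z ∈ ball p (min ε δ'), F z = f' z := by
    intro z hz
    have hz1 : ‖z - p‖ ≤ ε := by
      have := (mem_ball.1 hz).le; rw [dist_eq_norm] at this
      exact this.trans (min_le_left _ _)
    have hz2 : ‖z - p‖ ≤ δ' := by
      have := (mem_ball.1 hz).le; rw [dist_eq_norm] at this
      exact this.trans (min_le_right _ _)
    have hd : DifferentiableOn ℂ (fun ξ => f' (φ ξ + (z - p))) (closedBall 0 r) := by
      intro ξ hξ
      have h1 : φ ξ + (z - p) ∈ V ∪ ball p δ := by
        apply hthick'
        apply mem_cthickening_of_dist_le _ (φ ξ) _ _ (mem_image_of_mem φ hξ)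
        simpa using hz2
      have h2 : DifferentiableAt ℂ (fun ξ => φ ξ + (z - p)) ξ :=
        ((hφd ξ (hcb hξ)).differentiableAt (isOpen_ball.mem_nhds (hcb hξ))).add_const _
      exact (DifferentiableAt.comp ξ (hf'd _ h1) h2).differentiableWithinAt
    have hC := hd.circleIntegral_sub_inv_smul (w := 0) (by simpa using hr0)
    have hcong : (∮ ξ in C(0, r), (ξ - 0)⁻¹ • f (φ ξ + (z - p))) =
        ∮ ξ in C(0, r), (ξ - 0)⁻¹ • f' (φ ξ + (z - p)) := by
      apply circleIntegral.integral_congr hr0.le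
      intro ξ hξ
      simp only [hf'V _ (hin ξ hξ _ hz1)]
    simp only [hF]
    rw [hcong, hC, smul_smul, inv_mul_cancel₀ Complex.two_pi_I_ne_zero, one_smul, hφ0]
    simp
  rintro z ⟨hzΩ, hzV⟩
  have hzρ : ρ z ≠ 0 := by
    rw [hVeq] at hzV
    have := connectedComponentIn_subset _ _ hzV
    rw [hUH] at this
    exact this.2
  have hz1 : z ∈ ball p ε := ball_subset_ball (min_le_left _ _) hzΩ
  have hcl := hT z (ball_subset_ball (min_le_right _ _) hzΩ) (by simpa using hzρ)
  set W := connectedComponentIn (ball p ε ∩ {z | ρ z ≠ 0}) z with hW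
  have hWo : IsOpen W := (hopen _ hsU isOpen_ball).connectedComponentIn
  have hWsub : W ⊆ ball p ε ∩ {z | ρ z ≠ 0} := connectedComponentIn_subset _ _
  have hWc : IsPreconnected W := isPreconnected_connectedComponentIn
  have hzW : z ∈ W := mem_connectedComponentIn ⟨hz1, hzρ⟩
  have hWV : W ⊆ V := by
    have h1 : V = connectedComponentIn (U \ H) z := by
      rw [hVeq]
      apply connectedComponentIn_eq
      rw [← hVeq]; exact hzV
    rw [h1]
    apply hWc.subset_connectedComponentIn hzW
    rw [hUH]
    exact hWsub.trans (inter_subset_inter_left _ hsU)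
  obtain ⟨y, hyW, hyp⟩ := Metric.mem_closure_iff.1 hcl (min ε δ') (lt_min hεpos hδ')
  have hyb : y ∈ ball p (min ε δ') := by rwa [mem_ball, dist_comm]
  refine identity_thm hWo hWc (hFd.mono (hWsub.trans inter_subset_left)) (hf.mono hWV) hyW ?_ hzW
  filter_upwards [isOpen_ball.mem_nhds hyb, hWo.mem_nhds hyW] with q hq1 hq2
  rw [hFf q hq1, hf'V q (hWV hq2)]
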